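/- There is a universal constant C such that the following holds. Let (g_υ)_{υ∈ℝ^I} be a nice distribution of polynomials on ℝ^n that is (k,S,1)-attenuated on average for some k ∈ ℕ with k ≥ 1. Fix 0 < β' < 1 and 0 ≤ λ ≤ 1, and suppose S ≥ C·k·log(3/β')/β'. Then for x ∼ N(0,1)^n, except with probability at most β', we have E_υ[‖(g_υ)_{λ|x}‖₂²] ≥ (β'/(C·k))^{2k}·E_υ[‖g_υ‖₂²]. -/

import Mathlib

open MeasureTheory ProbabilityTheory MvPolynomial

/-- The standard Gaussian measure `N(0,1)^n` on `ℝ^n`. -/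
noncomputable def gaussianN (n : ℕ) : Measure (Fin n → ℝ) :=
  Measure.pi fun _ => gaussianReal 0 1

/-- The normalized probabilists' Hermite polynomial `h_k = H_k / √(k!)`. -/
noncomputable def hermiteFn (k : ℕ) (t : ℝ) : ℝ :=
  ((Polynomial.hermite k).map (Int.castRingHom ℝ)).eval t / Real.sqrt (Nat.factorial k)

/-- The multivariate Hermite polynomial `h_α(x) = ∏ i, h_{α i}(x i)`. -/
noncomputable def hermiteMv {n : ℕ} (α : Fin n → ℕ) (x : Fin n → ℝ) : ℝ :=
  ∏ i, hermiteFn (α i) (x i)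

/-- Hermite coefficient `f̂(α) = E_{x ∼ N(0,1)^n}[f(x)·h_α(x)]` of a function. -/
noncomputable def hermiteCoeffF {n : ℕ} (f : (Fin n → ℝ) → ℝ) (α : Fin n → ℕ) : ℝ :=
  ∫ x, f x * hermiteMv α x ∂(gaussianN n)

/-- Hermite coefficient `ĝ(α)` of a polynomial. -/
noncomputable def hermiteCoeff {n : ℕ} (g : MvPolynomial (Fin n) ℝ) (α : Fin n → ℕ) : ℝ :=
  hermiteCoeffF (fun x => eval x g) α

/-- The squared Gaussian 2-norm `‖g‖₂² = E_{x ∼ N(0,1)^n}[g(x)²]`. -/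
noncomputable def norm2sq {n : ℕ} (g : MvPolynomial (Fin n) ℝ) : ℝ :=
  ∫ x, (eval x g) ^ 2 ∂(gaussianN n)

/-- The `λ`-zoom of `g` at `x`: `g_{λ|x}(y) = g(√(1-λ)·x + √λ·y)`, as a polynomial in `y`. -/
noncomputable def zoom {n : ℕ} (g : MvPolynomial (Fin n) ℝ) (lam : ℝ) (x : Fin n → ℝ) :
    MvPolynomial (Fin n) ℝ :=
  aeval (fun i => C (Real.sqrt (1 - lam) * x i) + C (Real.sqrt lam) * X i) g

/-- `HyperVar_R[g^{≥m}] = Σ_{|α| ≥ m} R^{2|α|}·ĝ(α)²`. -/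
noncomputable def hyperVarGE {n : ℕ} (R : ℝ) (m : ℕ) (g : MvPolynomial (Fin n) ℝ) : ℝ :=
  ∑' α : Fin n → ℕ, if m ≤ ∑ i, α i then R ^ (2 * ∑ i, α i) * hermiteCoeff g α ^ 2 else 0

/-- `HyperVar_R[g] = Σ_{α ≠ 0} R^{2|α|}·ĝ(α)²`. -/
noncomputable def hyperVar {n : ℕ} (R : ℝ) (g : MvPolynomial (Fin n) ℝ) : ℝ :=
  hyperVarGE R 1 g

/-- A nice distribution of polynomials of degree at most `d` on `ℝ^n`, indexed by
`υ ∈ ℝ^I`: each `g υ` has degree at most `d` and each coefficient of `g υ` is a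
polynomial of degree at most `d` in `υ`. -/
def NiceFamily (n I d : ℕ) (g : (Fin I → ℝ) → MvPolynomial (Fin n) ℝ) : Prop :=
  (∀ υ, (g υ).totalDegree ≤ d) ∧
  ∀ m : Fin n →₀ ℕ, ∃ P : MvPolynomial (Fin I) ℝ,
    P.totalDegree ≤ d ∧ ∀ υ, coeff m (g υ) = eval υ P

/-!
Split each `g_υ` into its parts of degree at most `k` and above `k`. Averaging over `υ` and over
the zoom variable, the square of the low part is a nonnegative polynomial of degree at most `2k` in
`x`, with mean at least half of `N = E_υ[‖g_υ‖₂²]`. It is therefore, except with probability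
`β'/2`, at least `4(β'/(Ck))^{2k} N`, by an anti-concentration inequality for polynomials in
Gaussian variables: localization reduces it to neighbourhoods of lines, where the marginals of the
Gaussian measure are log-concave by Prékopa–Leindler and Remez' inequality applies. Attenuation
gains a factor `S^{-2(k+1)}` on the high part, so by Markov's inequality it exceeds `(β'/(Ck))^{2k}
N` with probability at most `β'/2`; being this small, it cannot cancel the low part.
-/

open scoped ENNReal Pointwise

section PrekopaLeindler

theorem volume_add_volume_le_volume_add_of_isCompact {A B : Set ℝ} (hA : IsCompact A)
    (hB : IsCompact B) (hA₀ : A.Nonempty) (hB₀ : B.Nonempty) :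
    volume A + volume B ≤ volume (A + B) := by
  obtain ⟨p, hpA, hp⟩ := hA.exists_isMaxOn hA₀ continuousOn_id
  obtain ⟨q, hqB, hq⟩ := hB.exists_isMinOn hB₀ continuousOn_id
  -- The translates `A + q` and `p + B` meet only at `p + q`.
  have left : volume A ≤ volume ((A + B) ∩ Set.Iic (p + q)) := by
    rw [← measure_preimage_add_right volume (-q) A]
    refine measure_mono fun x hx => ⟨⟨_, hx, q, hqB, by simp⟩, ?_⟩
    have : x + -q ≤ p := hp hx
    simp only [Set.mem_Iic]; linarith
  have right : volume B ≤ volume ((A + B) \ Set.Iic (p + q)) := by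
    rw [← measure_preimage_add_right volume (-p) B,
      ← measure_sdiff_null (s := (fun x => x + -p) ⁻¹' B) (Real.volume_singleton (a := p + q))]
    refine measure_mono fun x hx => ⟨⟨p, hpA, _, hx.1, by simp⟩, ?_⟩
    have hqx : q ≤ x + -p := hq hx.1
    simpa only [Set.mem_Iic, not_le] using lt_of_le_of_ne (by linarith) (Ne.symm hx.2)
  calc volume A + volume B ≤ _ := add_le_add left right
    _ = volume (A + B) := measure_inter_add_sdiff _ measurableSet_Iic

theorem volume_add_le_of_forall_isCompact {A : Set ℝ} (hA : MeasurableSet A) {b c : ℝ≥0∞}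
    (h : ∀ K ⊆ A, IsCompact K → volume K + b ≤ c) : volume A + b ≤ c := by
  simp only [hA.measure_eq_iSup_isCompact, ENNReal.iSup_add, iSup_le_iff]
  intro K
  by_cases hK : K ⊆ A ∧ IsCompact K
  · simpa [hK.1, hK.2] using h K hK.1 hK.2
  · have hb : b ≤ c := (le_add_left le_rfl).trans (h ∅ (by simp) isCompact_empty)
    rcases not_and_or.1 hK with hK | hK <;> simp [hK, hb]

/-- The **Brunn–Minkowski inequality** on the real line. -/
theorem volume_add_volume_le_volume_add {A B : Set ℝ} (hA : MeasurableSet A)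
    (hB : MeasurableSet B) (hA₀ : A.Nonempty) (hB₀ : B.Nonempty) :
    volume A + volume B ≤ volume (A + B) := by
  obtain ⟨a, ha⟩ := hA₀
  obtain ⟨b, hb⟩ := hB₀
  refine volume_add_le_of_forall_isCompact hA fun K hKA hK => ?_
  rw [add_comm]
  refine volume_add_le_of_forall_isCompact hB fun L hLB hL => ?_
  calc volume L + volume K = volume K + volume L := add_comm _ _
    _ ≤ volume (insert a K) + volume (insert b L) := by gcongr <;> exact Set.subset_insert _ _
    _ ≤ volume (insert a K + insert b L) := volume_add_volume_le_volume_add_of_isCompact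
        (hK.insert a) (hL.insert b) (Set.insert_nonempty _ _) (Set.insert_nonempty _ _)
    _ ≤ volume (A + B) := measure_mono <|
        Set.add_subset_add (Set.insert_subset ha hKA) (Set.insert_subset hb hLB)

theorem lintegral_eq_lintegral_Ioo_meas_lt {f : ℝ → ℝ≥0∞} (hf : Measurable f)
    (hf_le : ∀ x, f x ≤ 1) :
    ∫⁻ x, f x = ∫⁻ t in Set.Ioo (0 : ℝ) 1, volume {x | ENNReal.ofReal t < f x} := by
  have hf_top : ∀ x, f x ≠ ∞ := fun x => ((hf_le x).trans_lt ENNReal.one_lt_top).ne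
  have level : ∀ t ∈ Set.Ioi (0 : ℝ), volume {x | t < (f x).toReal} =
      (Set.Ioo (0 : ℝ) 1).indicator (fun t => volume {x | ENNReal.ofReal t < f x}) t := by
    intro t ht
    have lt_iff : ∀ x, t < (f x).toReal ↔ ENNReal.ofReal t < f x := fun x =>
      (ENNReal.ofReal_lt_iff_lt_toReal (le_of_lt ht) (hf_top x)).symm
    simp only [lt_iff]
    rcases lt_or_ge t 1 with ht1 | ht1
    · rw [Set.indicator_of_mem (Set.mem_Ioo.2 ⟨ht, ht1⟩)]
    · have hempty : {x | ENNReal.ofReal t < f x} = ∅ := Set.eq_empty_of_forall_notMem fun x hx =>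
        (hx.trans_le (hf_le x)).not_ge (by simpa using ht1)
      rw [Set.indicator_of_notMem fun h => absurd h.2 (not_lt.2 ht1), hempty, measure_empty]
  calc ∫⁻ x, f x = ∫⁻ x, ENNReal.ofReal (f x).toReal :=
        lintegral_congr fun x => (ENNReal.ofReal_toReal (hf_top x)).symm
    _ = ∫⁻ t in Set.Ioi 0, volume {x | t < (f x).toReal} := lintegral_eq_lintegral_meas_lt _
        (ae_of_all _ fun _ => ENNReal.toReal_nonneg) hf.ennreal_toReal.aemeasurable
    _ = _ := by
        rw [setLIntegral_congr_fun measurableSet_Ioi level,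
          setLIntegral_indicator measurableSet_Ioo, Set.inter_eq_left.2 fun t ht => ht.1]

theorem geom_mean_le_arith_mean_ennreal {s : ℝ} (hs : s ∈ Set.Ioo (0 : ℝ) 1) (a b : ℝ≥0∞) :
    a ^ (1 - s) * b ^ s ≤ ENNReal.ofReal (1 - s) * a + ENNReal.ofReal s * b := by
  have hs0 : 0 < s := hs.1
  have hs1 : 0 < 1 - s := sub_pos.2 hs.2
  rcases eq_or_ne a ∞ with rfl | ha
  · simp [ENNReal.mul_top, hs.2]
  rcases eq_or_ne b ∞ with rfl | hb
  · simp [ENNReal.mul_top, hs0]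
  lift a to NNReal using ha
  lift b to NNReal using hb
  have := NNReal.geom_mean_le_arith_mean2_weighted (1 - s).toNNReal s.toNNReal a b
    (by rw [← Real.toNNReal_add hs1.le hs0.le]; simp)
  rw [Real.coe_toNNReal _ hs1.le, Real.coe_toNNReal _ hs0.le] at this
  simpa [ENNReal.ofReal, ENNReal.coe_rpow_of_nonneg, hs0.le, hs1.le] using
    ENNReal.coe_le_coe.2 this

theorem mul_rpow_mul_mul_rpow {s : ℝ} (hs : s ∈ Set.Ioo (0 : ℝ) 1) (a b c d : ℝ≥0∞) :
    (a * b) ^ (1 - s) * (c * d) ^ s = a ^ (1 - s) * c ^ s * (b ^ (1 - s) * d ^ s) := by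
  rw [ENNReal.mul_rpow_of_nonneg _ _ (sub_nonneg.2 hs.2.le), ENNReal.mul_rpow_of_nonneg _ _ hs.1.le,
    mul_mul_mul_comm]

section LogConcavity

variable {E : Type*} [AddCommGroup E] [Module ℝ E]

/-- Log-concavity of a density with values in `[0, ∞]`, so that no positivity or finiteness has to
be carried along. -/
def IsLogConcave (f : E → ℝ≥0∞) : Prop :=
  ∀ ⦃s : ℝ⦄, s ∈ Set.Ioo 0 1 → ∀ x y, f x ^ (1 - s) * f y ^ s ≤ f ((1 - s) • x + s • y)

/-- The measures for which the Prékopa–Leindler inequality holds. Working with this class, rather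
than with log-concave densities, lets the inequality pass to products by Fubini's theorem. -/
def IsPrekopaLeindler [MeasurableSpace E] (μ : Measure E) : Prop :=
  ∀ ⦃s : ℝ⦄, s ∈ Set.Ioo 0 1 → ∀ ⦃f g h : E → ℝ≥0∞⦄, Measurable f → Measurable g → Measurable h →
    (∀ x y, f x ^ (1 - s) * g y ^ s ≤ h ((1 - s) • x + s • y)) →
      (∫⁻ x, f x ∂μ) ^ (1 - s) * (∫⁻ x, g x ∂μ) ^ s ≤ ∫⁻ x, h x ∂μ

theorem IsLogConcave.mul {f g : E → ℝ≥0∞} (hf : IsLogConcave f) (hg : IsLogConcave g) :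
    IsLogConcave fun x => f x * g x := fun s hs x y => by
  rw [mul_rpow_mul_mul_rpow hs]
  exact mul_le_mul' (hf hs x y) (hg hs x y)

theorem isLogConcave_indicator_one {K : Set E} (hK : Convex ℝ K) :
    IsLogConcave (K.indicator (1 : E → ℝ≥0∞)) := by
  intro s hs x y
  by_cases hx : x ∈ K
  · by_cases hy : y ∈ K
    · simp [hx, hy, hK hx hy (sub_nonneg.2 hs.2.le) hs.1.le (by ring)]
    · simp [hy, hs.1]
  · simp [hx, sub_pos.2 hs.2]

theorem isLogConcave_gaussianPDF (m : ℝ) (v : NNReal) : IsLogConcave (gaussianPDF m v) := by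
  intro s hs x y
  have hs0 : 0 < s := hs.1
  have hs1 : 0 < 1 - s := sub_pos.2 hs.2
  rcases eq_or_ne v 0 with rfl | hv
  · simp [hs1]
  have hc : 0 < (√(2 * Real.pi * v))⁻¹ := by positivity
  set c := (√(2 * Real.pi * v))⁻¹
  have exponent : -(x - m) ^ 2 / (2 * v) * (1 - s) + -(y - m) ^ 2 / (2 * v) * s ≤
      -((1 - s) • x + s • y - m) ^ 2 / (2 * v) := by
    rw [div_mul_eq_mul_div, div_mul_eq_mul_div, ← add_div]
    gcongr
    simp only [smul_eq_mul]
    nlinarith [mul_nonneg (mul_nonneg hs1.le hs0.le) (sq_nonneg (x - y))]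
  have hp := gaussianPDFReal_nonneg m v
  simp only [gaussianPDF]
  rw [ENNReal.ofReal_rpow_of_nonneg (hp x) hs1.le, ENNReal.ofReal_rpow_of_nonneg (hp y) hs0.le,
    ← ENNReal.ofReal_mul (Real.rpow_nonneg (hp x) _)]
  refine ENNReal.ofReal_le_ofReal ?_
  calc gaussianPDFReal m v x ^ (1 - s) * gaussianPDFReal m v y ^ s
      = c ^ (1 - s) * c ^ s * (Real.exp (-(x - m) ^ 2 / (2 * v) * (1 - s)) *
          Real.exp (-(y - m) ^ 2 / (2 * v) * s)) := by
        rw [gaussianPDFReal, gaussianPDFReal, Real.mul_rpow hc.le (Real.exp_pos _).le,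
          Real.mul_rpow hc.le (Real.exp_pos _).le, ← Real.exp_mul, ← Real.exp_mul, mul_mul_mul_comm]
    _ = c * Real.exp (-(x - m) ^ 2 / (2 * v) * (1 - s) + -(y - m) ^ 2 / (2 * v) * s) := by
        rw [← Real.rpow_add hc, ← Real.exp_add, sub_add_cancel, Real.rpow_one]
    _ ≤ gaussianPDFReal m v ((1 - s) • x + s • y) := by
        rw [gaussianPDFReal]
        gcongr

end LogConcavity

theorem mul_volume_level_add_le {f g h : ℝ → ℝ≥0∞} {s t : ℝ} (hs : s ∈ Set.Ioo (0 : ℝ) 1)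
    (ht : 0 < t) (hf : Measurable f) (hg : Measurable g)
    (hft : ENNReal.ofReal t < ⨆ x, f x) (hgt : ENNReal.ofReal t < ⨆ x, g x)
    (hfgh : ∀ x y, f x ^ (1 - s) * g y ^ s ≤ h ((1 - s) • x + s • y)) :
    ENNReal.ofReal (1 - s) * volume {x | ENNReal.ofReal t < f x} +
      ENNReal.ofReal s * volume {x | ENNReal.ofReal t < g x} ≤
        volume {x | ENNReal.ofReal t < h x} := by
  have hs0 : 0 < s := hs.1
  have hs1 : 0 < 1 - s := sub_pos.2 hs.2
  have smul_volume : ∀ r : ℝ, 0 < r → ∀ A : Set ℝ,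
      ENNReal.ofReal r * volume A = volume (r • A) := fun r hr A => by
    simp [Measure.addHaar_smul, abs_of_pos hr]
  have hf₀ : {x | ENNReal.ofReal t < f x}.Nonempty := lt_iSup_iff.1 hft
  have hg₀ : {x | ENNReal.ofReal t < g x}.Nonempty := lt_iSup_iff.1 hgt
  rw [smul_volume _ hs1, smul_volume _ hs0]
  refine (volume_add_volume_le_volume_add
    ((measurableSet_lt measurable_const hf).const_smul₀ _)
    ((measurableSet_lt measurable_const hg).const_smul₀ _)
    hf₀.smul_set hg₀.smul_set).trans (measure_mono ?_)
  rintro _ ⟨_, ⟨x, hx, rfl⟩, _, ⟨y, hy, rfl⟩, rfl⟩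
  calc ENNReal.ofReal t = ENNReal.ofReal t ^ (1 - s) * ENNReal.ofReal t ^ s := by
        rw [← ENNReal.rpow_add _ _ (by simpa using ht) ENNReal.ofReal_ne_top]; simp
    _ < f x ^ (1 - s) * g y ^ s :=
        ENNReal.mul_lt_mul (ENNReal.rpow_lt_rpow hx hs1) (ENNReal.rpow_lt_rpow hy hs0)
    _ ≤ h ((1 - s) • x + s • y) := hfgh x y

theorem lintegral_add_lintegral_le_of_iSup_eq_one {f g h : ℝ → ℝ≥0∞} {s : ℝ}
    (hs : s ∈ Set.Ioo (0 : ℝ) 1) (hf : Measurable f) (hg : Measurable g) (hh : Measurable h)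
    (hf1 : ⨆ x, f x = 1) (hg1 : ⨆ x, g x = 1)
    (hfgh : ∀ x y, f x ^ (1 - s) * g y ^ s ≤ h ((1 - s) • x + s • y)) :
    ENNReal.ofReal (1 - s) * (∫⁻ x, f x) + ENNReal.ofReal s * (∫⁻ x, g x) ≤ ∫⁻ x, h x := by
  have measurable_level : ∀ u : ℝ → ℝ≥0∞,
      Measurable fun t : ℝ => volume {x | ENNReal.ofReal t < u x} := fun u =>
    Antitone.measurable fun t t' htt => measure_mono fun x hx =>
      (ENNReal.ofReal_le_ofReal htt).trans_lt hx
  calc ENNReal.ofReal (1 - s) * (∫⁻ x, f x) + ENNReal.ofReal s * (∫⁻ x, g x)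
      = ∫⁻ t in Set.Ioo (0 : ℝ) 1, (ENNReal.ofReal (1 - s) *
          volume {x | ENNReal.ofReal t < f x} + ENNReal.ofReal s *
          volume {x | ENNReal.ofReal t < g x}) := by
        rw [lintegral_add_left ((measurable_level f).const_mul _),
          lintegral_const_mul _ (measurable_level f),
          lintegral_const_mul _ (measurable_level g),
          lintegral_eq_lintegral_Ioo_meas_lt hf fun x => hf1 ▸ le_iSup f x,
          lintegral_eq_lintegral_Ioo_meas_lt hg fun x => hg1 ▸ le_iSup g x]
    _ ≤ ∫⁻ t in Set.Ioo (0 : ℝ) 1, volume {x | ENNReal.ofReal t < min (h x) 1} := by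
        refine setLIntegral_mono (measurable_level _) fun t ht => ?_
        have ht1 : ENNReal.ofReal t < 1 := by simpa using ht.2
        simpa only [lt_min_iff, ht1, and_true] using
          mul_volume_level_add_le hs ht.1 hf hg (hf1 ▸ ht1) (hg1 ▸ ht1) hfgh
    _ = ∫⁻ x, min (h x) 1 := (lintegral_eq_lintegral_Ioo_meas_lt (hh.min measurable_const)
          fun x => min_le_right _ _).symm
    _ ≤ ∫⁻ x, h x := lintegral_mono fun x => min_le_left _ _

theorem prekopaLeindler_of_iSup_ne_top {f g h : ℝ → ℝ≥0∞} {s : ℝ} (hs : s ∈ Set.Ioo (0 : ℝ) 1)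
    (hf : Measurable f) (hg : Measurable g) (hh : Measurable h)
    (hf_top : ⨆ x, f x ≠ ∞) (hg_top : ⨆ x, g x ≠ ∞)
    (hfgh : ∀ x y, f x ^ (1 - s) * g y ^ s ≤ h ((1 - s) • x + s • y)) :
    (∫⁻ x, f x) ^ (1 - s) * (∫⁻ x, g x) ^ s ≤ ∫⁻ x, h x := by
  have hs0 : 0 < s := hs.1
  have hs1 : 0 < 1 - s := sub_pos.2 hs.2
  set a := ⨆ x, f x
  set b := ⨆ x, g x
  rcases eq_or_ne a 0 with ha | ha
  · simp [ENNReal.iSup_eq_zero.1 ha, hs1]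
  rcases eq_or_ne b 0 with hb | hb
  · simp [ENNReal.iSup_eq_zero.1 hb, hs0]
  set c := a⁻¹ ^ (1 - s) * b⁻¹ ^ s
  have hc : c ≠ 0 := by simp [c, hf_top, hg_top, ha, hb]
  have hc_top : c ≠ ∞ := ENNReal.mul_ne_top
    (ENNReal.rpow_ne_top_of_nonneg hs1.le (ENNReal.inv_ne_top.2 ha))
    (ENNReal.rpow_ne_top_of_nonneg hs0.le (ENNReal.inv_ne_top.2 hb))
  have normalized := lintegral_add_lintegral_le_of_iSup_eq_one hs (hf.const_mul a⁻¹)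
    (hg.const_mul b⁻¹) (hh.const_mul c)
    (by rw [← ENNReal.mul_iSup, ENNReal.inv_mul_cancel ha hf_top])
    (by rw [← ENNReal.mul_iSup, ENNReal.inv_mul_cancel hb hg_top])
    fun x y => by rw [mul_rpow_mul_mul_rpow hs]; gcongr; exact hfgh x y
  rw [lintegral_const_mul _ hf, lintegral_const_mul _ hg, lintegral_const_mul _ hh] at normalized
  rw [← ENNReal.mul_le_mul_iff_right hc hc_top, ← mul_rpow_mul_mul_rpow hs]
  exact (geom_mean_le_arith_mean_ennreal hs _ _).trans normalized

theorem iSup_lintegral_min_natCast {α : Type*} [MeasurableSpace α] (μ : Measure α)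
    {f : α → ℝ≥0∞} (hf : Measurable f) : ⨆ n : ℕ, ∫⁻ x, min (f x) n ∂μ = ∫⁻ x, f x ∂μ := by
  rw [← lintegral_iSup (fun n => hf.min measurable_const)
    fun m n hmn x => min_le_min_left _ (by exact_mod_cast hmn)]
  refine lintegral_congr fun x => ?_
  rw [← inf_iSup_eq, ENNReal.iSup_natCast, inf_top_eq]

/-- The **Prékopa–Leindler inequality** on the real line. -/
theorem isPrekopaLeindler_volume : IsPrekopaLeindler (volume : Measure ℝ) := by
  intro s hs f g h hf hg hh hfgh
  have hs0 : 0 < s := hs.1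
  have hs1 : 0 < 1 - s := sub_pos.2 hs.2
  have iSup_min_ne_top : ∀ (u : ℝ → ℝ≥0∞) (n : ℕ), ⨆ x, min (u x) n ≠ ∞ := fun u n =>
    ne_top_of_le_ne_top (ENNReal.natCast_ne_top n) (iSup_le fun x => min_le_right _ _)
  have truncated : ∀ n : ℕ,
      (∫⁻ x, min (f x) n) ^ (1 - s) * (∫⁻ x, min (g x) n) ^ s ≤ ∫⁻ x, h x := fun n =>
    prekopaLeindler_of_iSup_ne_top hs (hf.min measurable_const) (hg.min measurable_const) hh
      (iSup_min_ne_top f n) (iSup_min_ne_top g n) fun x y => le_trans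
        (by gcongr <;> exact min_le_left _ _) (hfgh x y)
  have iSup_rpow : ∀ (u : ℝ → ℝ≥0∞) (r : ℝ), Measurable u → 0 < r →
      (∫⁻ x, u x) ^ r = ⨆ n : ℕ, (∫⁻ x, min (u x) n) ^ r := fun u r hu hr => by
    rw [← iSup_lintegral_min_natCast volume hu]
    exact (ENNReal.orderIsoRpow r hr).map_iSup _
  have monotone_rpow : ∀ (u : ℝ → ℝ≥0∞) (r : ℝ), 0 < r →
      Monotone fun n : ℕ => (∫⁻ x, min (u x) n) ^ r := fun u r hr m n hmn => by
    dsimp only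
    gcongr
  rw [iSup_rpow f _ hf hs1, iSup_rpow g _ hg hs0, ENNReal.iSup_mul]
  refine iSup_le fun m => ?_
  rw [ENNReal.mul_iSup]
  exact iSup_le fun n => le_trans (mul_le_mul' (monotone_rpow f _ hs1 (le_max_left m n))
    (monotone_rpow g _ hs0 (le_max_right m n))) (truncated (max m n))

/-- Insertion of an `i`-th coordinate, as a linear map on `ℝ × ℝⁿ`. -/
def insertNthLinearMap {n : ℕ} (i : Fin (n + 1)) :
    ℝ × (Fin n → ℝ) →ₗ[ℝ] (Fin (n + 1) → ℝ) where
  toFun p := i.insertNth p.1 p.2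
  map_add' p q := by simp [Fin.insertNth_add]
  map_smul' c p := by
    ext j
    rcases Fin.eq_self_or_eq_succAbove i j with rfl | ⟨k, rfl⟩ <;> simp

theorem measurable_insertNthLinearMap {n : ℕ} (i : Fin (n + 1)) :
    Measurable (insertNthLinearMap i) :=
  (MeasurableEquiv.piFinSuccAbove (fun _ => ℝ) i).symm.measurable

namespace IsPrekopaLeindler

variable {E F : Type*} [AddCommGroup E] [Module ℝ E] [MeasurableSpace E]
  [AddCommGroup F] [Module ℝ F] [MeasurableSpace F] {μ : Measure E} {ν : Measure F}

theorem withDensity (hμ : IsPrekopaLeindler μ) {p : E → ℝ≥0∞} (hp : Measurable p)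
    (hp' : IsLogConcave p) : IsPrekopaLeindler (μ.withDensity p) := by
  intro s hs f g h hf hg hh hfgh
  rw [lintegral_withDensity_eq_lintegral_mul _ hp hf,
    lintegral_withDensity_eq_lintegral_mul _ hp hg, lintegral_withDensity_eq_lintegral_mul _ hp hh]
  refine hμ hs (hp.mul hf) (hp.mul hg) (hp.mul hh) fun x y => ?_
  rw [Pi.mul_apply, Pi.mul_apply, mul_rpow_mul_mul_rpow hs]
  exact mul_le_mul' (hp' hs x y) (hfgh x y)

theorem map (hμ : IsPrekopaLeindler μ) (L : E →ₗ[ℝ] F) (hL : Measurable L) :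
    IsPrekopaLeindler (μ.map L) := by
  intro s hs f g h hf hg hh hfgh
  rw [lintegral_map hf hL, lintegral_map hg hL, lintegral_map hh hL]
  exact hμ hs (hf.comp hL) (hg.comp hL) (hh.comp hL) fun x y => by simpa using hfgh (L x) (L y)

theorem prod [SFinite ν] (hμ : IsPrekopaLeindler μ) (hν : IsPrekopaLeindler ν) :
    IsPrekopaLeindler (μ.prod ν) := by
  intro s hs f g h hf hg hh hfgh
  rw [lintegral_prod _ hf.aemeasurable, lintegral_prod _ hg.aemeasurable,
    lintegral_prod _ hh.aemeasurable]
  refine hμ hs hf.lintegral_prod_right' hg.lintegral_prod_right' hh.lintegral_prod_right'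
    fun x x' => ?_
  exact hν hs (hf.comp measurable_prodMk_left) (hg.comp measurable_prodMk_left)
    (hh.comp measurable_prodMk_left) fun y y' => hfgh (x, y) (x', y')

theorem pi : ∀ {n : ℕ} {μ : Fin n → Measure ℝ} [∀ i, SigmaFinite (μ i)],
    (∀ i, IsPrekopaLeindler (μ i)) → IsPrekopaLeindler (Measure.pi μ)
  | 0, μ, _, _ => by
    intro s _ f g h hf hg hh hfgh
    rw [Measure.pi_of_empty μ default, lintegral_dirac' _ hf, lintegral_dirac' _ hg,
      lintegral_dirac' _ hh]
    convert hfgh default default using 2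
  | n + 1, μ, _, hμ => by
    rw [← (measurePreserving_piFinSuccAbove μ 0).symm.map_eq]
    exact ((hμ 0).prod (pi fun i => hμ (Fin.succAbove 0 i))).map
      (insertNthLinearMap 0) (measurable_insertNthLinearMap 0)

theorem isLogConcave_measure_section [SFinite μ] (hμ : IsPrekopaLeindler μ) {K : Set (F × E)}
    (hK : MeasurableSet K) (hK' : Convex ℝ K) :
    IsLogConcave fun t => μ (Prod.mk t ⁻¹' K) := by
  intro s hs t u
  have section_meas : ∀ r, MeasurableSet (Prod.mk r ⁻¹' K) := fun r => measurable_prodMk_left hK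
  simp only [← lintegral_indicator_one (section_meas _)]
  refine hμ hs (measurable_one.indicator (section_meas _))
    (measurable_one.indicator (section_meas _)) (measurable_one.indicator (section_meas _))
    fun x y => ?_
  exact isLogConcave_indicator_one hK' hs (t, x) (u, y)

end IsPrekopaLeindler

end PrekopaLeindler

section GaussianMarginals

instance instIsProbabilityMeasureGaussianN (n : ℕ) : IsProbabilityMeasure (gaussianN n) := by
  unfold gaussianN; infer_instance

theorem isPrekopaLeindler_gaussianReal (m : ℝ) {v : NNReal} (hv : v ≠ 0) :
    IsPrekopaLeindler (gaussianReal m v) := by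
  rw [gaussianReal_of_var_ne_zero m hv]
  exact isPrekopaLeindler_volume.withDensity (measurable_gaussianPDF m v)
    (isLogConcave_gaussianPDF m v)

theorem isPrekopaLeindler_gaussianN (n : ℕ) : IsPrekopaLeindler (gaussianN n) :=
  IsPrekopaLeindler.pi fun _ => isPrekopaLeindler_gaussianReal 0 one_ne_zero

theorem gaussianPDF_le (m : ℝ) (v : NNReal) (x : ℝ) :
    gaussianPDF m v x ≤ ENNReal.ofReal (√(2 * Real.pi * v))⁻¹ := by
  refine ENNReal.ofReal_le_ofReal (mul_le_of_le_one_right (by positivity) ?_)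
  rw [Real.exp_le_one_iff]
  exact div_nonpos_of_nonpos_of_nonneg (neg_nonpos.2 (sq_nonneg _)) (by positivity)

theorem measurePreserving_insertNthLinearMap_gaussianN {n : ℕ} (i : Fin (n + 1)) :
    MeasurePreserving (insertNthLinearMap i) ((gaussianReal 0 1).prod (gaussianN n))
      (gaussianN (n + 1)) :=
  (measurePreserving_piFinSuccAbove (fun _ : Fin (n + 1) => gaussianReal 0 1) i).symm

theorem exists_logConcave_density_map_eval_restrict_gaussianN {n : ℕ} (i : Fin (n + 1))
    {K : Set (Fin (n + 1) → ℝ)} (hK : MeasurableSet K) (hK' : Convex ℝ K) :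
    ∃ f : ℝ → ℝ≥0∞, Measurable f ∧ IsLogConcave f ∧ ⨆ t, f t ≠ ∞ ∧
      ((gaussianN (n + 1)).restrict K).map (fun x => x i) = volume.withDensity f := by
  set L := insertNthLinearMap i
  have hL := measurePreserving_insertNthLinearMap_gaussianN i
  have hLK : MeasurableSet (L ⁻¹' K) := hL.measurable hK
  set f : ℝ → ℝ≥0∞ := fun t => gaussianN n (Prod.mk t ⁻¹' (L ⁻¹' K))
  have hf : Measurable f := measurable_measure_prodMk_left hLK
  have hpdf := measurable_gaussianPDF 0 1
  refine ⟨fun t => gaussianPDF 0 1 t * f t, hpdf.mul hf, (isLogConcave_gaussianPDF 0 1).mul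
    ((isPrekopaLeindler_gaussianN n).isLogConcave_measure_section hLK
      (hK'.linear_preimage L)), ?_, ?_⟩
  · exact ne_top_of_le_ne_top ENNReal.ofReal_ne_top (iSup_le fun t =>
      (mul_le_of_le_one_right' prob_le_one).trans (gaussianPDF_le 0 1 t))
  · ext s hs
    have hslice : ∀ t, gaussianN n (Prod.mk t ⁻¹' (L ⁻¹' ((fun x => x i) ⁻¹' s ∩ K))) =
        s.indicator f t := by
      intro t
      by_cases ht : t ∈ s
      · simp [f, L, insertNthLinearMap, Set.preimage, Set.ofPred_and, ht]
      · simp [L, insertNthLinearMap, Set.preimage, ht]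
    have hsi : MeasurableSet ((fun x : Fin (n + 1) → ℝ => x i) ⁻¹' s) := measurable_pi_apply i hs
    rw [Measure.map_apply (measurable_pi_apply i) hs, Measure.restrict_apply hsi,
      ← hL.measure_preimage (hsi.inter hK).nullMeasurableSet,
      Measure.prod_apply (hL.measurable (hsi.inter hK)), lintegral_congr hslice,
      lintegral_indicator hs, gaussianReal_of_var_ne_zero 0 one_ne_zero,
      withDensity_apply _ hs, setLIntegral_withDensity_eq_setLIntegral_mul _ hpdf hf hs]
    rfl

end GaussianMarginals

section Remez

theorem exists_separated_of_lt_volume {δ : ℝ} (hδ : 0 ≤ δ) (d : ℕ) {S : Set ℝ} (hb : BddBelow S)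
    (hS : ENNReal.ofReal (d * δ) < volume S) :
    ∃ x : ℕ → ℝ, (∀ i ≤ d, x i ∈ S) ∧ ∀ i < d, x i + δ ≤ x (i + 1) := by
  have hne : S.Nonempty := nonempty_of_measure_ne_zero (pos_of_gt hS).ne'
  induction d generalizing S with
  | zero =>
    obtain ⟨a, ha⟩ := hne
    exact ⟨fun _ => a, fun _ _ => ha, fun i hi => absurd hi (by simp)⟩
  | succ d ih =>
    obtain ⟨v, hv, hdv, hvS⟩ := ENNReal.lt_iff_exists_real_btwn.1 hS
    have hdv' : ((d + 1 : ℕ) : ℝ) * δ < v :=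
      (ENNReal.ofReal_lt_ofReal_iff_of_nonneg (by positivity)).1 hdv
    -- A point of `S` close to its infimum, so that little of `S` is lost below `x₀ + δ`.
    obtain ⟨x₀, hx₀, hx₀_lt⟩ := exists_lt_of_csInf_lt hne
      (show sInf S < sInf S + (v - ((d + 1 : ℕ) : ℝ) * δ) by linarith)
    have hS' : ENNReal.ofReal (d * δ) < volume (S ∩ Set.Ici (x₀ + δ)) := by
      by_contra! hcon
      have hcover : S ⊆ Set.Ico (sInf S) (x₀ + δ) ∪ (S ∩ Set.Ici (x₀ + δ)) := fun y hy =>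
        (lt_or_ge y (x₀ + δ)).imp (fun h => ⟨csInf_le hb hy, h⟩) fun h => ⟨hy, h⟩
      have hle : volume S ≤ ENNReal.ofReal (x₀ + δ - sInf S + d * δ) := by
        rw [ENNReal.ofReal_add (by linarith [csInf_le hb hx₀]) (by positivity), ← Real.volume_Ico]
        exact (measure_mono hcover).trans ((measure_union_le _ _).trans (by gcongr))
      have := (ENNReal.ofReal_lt_ofReal_iff_of_nonneg hv).1 (hvS.trans_le hle)
      push_cast at hx₀_lt
      linarith
    obtain ⟨x, hxS, hx⟩ := ih (hb.mono Set.inter_subset_left) hS'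
      (nonempty_of_measure_ne_zero (pos_of_gt hS').ne')
    refine ⟨fun i => Nat.casesOn i x₀ x, ?_, ?_⟩
    · rintro (_ | i) hi
      · exact hx₀
      · exact (hxS i (by omega)).1
    · rintro (_ | i) hi
      · exact (hxS 0 (by omega)).2
      · exact hx i (by omega)

theorem sub_mul_le_of_separated {δ : ℝ} {d : ℕ} {x : ℕ → ℝ} (hx : ∀ i < d, x i + δ ≤ x (i + 1))
    {i j : ℕ} (hij : i ≤ j) (hj : j ≤ d) : ((j : ℝ) - i) * δ ≤ x j - x i := by
  induction j, hij using Nat.le_induction with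
  | base => simp
  | succ j hij ih =>
    have := ih (by omega)
    have := hx j (by omega)
    push_cast
    linarith

theorem abs_sub_mul_le_of_separated {δ : ℝ} {d : ℕ} {x : ℕ → ℝ}
    (hx : ∀ i < d, x i + δ ≤ x (i + 1)) {i j : ℕ} (hi : i ≤ d) (hj : j ≤ d) :
    |(i : ℝ) - j| * δ ≤ |x i - x j| := by
  wlog hij : j ≤ i generalizing i j
  · rw [abs_sub_comm, abs_sub_comm (x i)]
    exact this hj hi (le_of_not_ge hij)
  rw [abs_of_nonneg (sub_nonneg.2 (Nat.cast_le.2 hij))]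
  exact (sub_mul_le_of_separated hx hij hi).trans (le_abs_self _)

theorem prod_abs_sub_erase {d i : ℕ} (hi : i ≤ d) :
    ∏ k ∈ (Finset.range (d + 1)).erase i, |(i : ℝ) - k| =
      (i.factorial : ℝ) * (d - i).factorial := by
  have hsplit : (Finset.range (d + 1)).erase i = Finset.range i ∪ Finset.Ico (i + 1) (d + 1) := by
    ext k
    simp only [Finset.mem_erase, Finset.mem_range, Finset.mem_union, Finset.mem_Ico]
    omega
  have hdisj : Disjoint (Finset.range i) (Finset.Ico (i + 1) (d + 1)) := by
    rw [Finset.range_eq_Ico]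
    exact (Finset.Ico_disjoint_Ico_consecutive 0 i (d + 1)).mono_right
      (Finset.Ico_subset_Ico_left i.le_succ)
  have below : ∏ k ∈ Finset.range i, |(i : ℝ) - k| = i.factorial := by
    rw [← Finset.prod_range_add_one_eq_factorial, ← Finset.prod_range_reflect]
    push_cast
    refine Finset.prod_congr rfl fun k hk => ?_
    obtain ⟨l, rfl⟩ := Nat.exists_eq_add_of_lt (Finset.mem_range.1 hk)
    rw [show k + l + 1 - 1 - k = l by omega, abs_of_nonneg (by push_cast; linarith)]
    push_cast
    ring
  have above : ∏ k ∈ Finset.Ico (i + 1) (d + 1), |(i : ℝ) - k| = (d - i).factorial := by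
    rw [Finset.prod_Ico_eq_prod_range, Nat.add_sub_add_right,
      ← Finset.prod_range_add_one_eq_factorial]
    push_cast
    refine Finset.prod_congr rfl fun k _ => ?_
    rw [abs_sub_comm, abs_of_nonneg (by linarith)]
    ring
  rw [hsplit, Finset.prod_union hdisj, below, above]

theorem sum_inv_factorial_mul_factorial (d : ℕ) :
    ∑ i ∈ Finset.range (d + 1), ((i.factorial : ℝ) * (d - i).factorial)⁻¹ =
      2 ^ d / d.factorial := by
  have hchoose : ∑ i ∈ Finset.range (d + 1), (d.choose i : ℝ) = 2 ^ d := by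
    exact_mod_cast Nat.sum_range_choose d
  rw [eq_div_iff (by positivity), Finset.sum_mul, ← hchoose]
  refine Finset.sum_congr rfl fun i hi => ?_
  rw [Nat.cast_choose ℝ (Nat.lt_succ_iff.1 (Finset.mem_range.1 hi))]
  field_simp

theorem abs_eval_lagrange_basis_le_of_separated {d : ℕ} {δ R t : ℝ} (hδ : 0 < δ) {x : ℕ → ℝ}
    (hx : ∀ i < d, x i + δ ≤ x (i + 1)) (hR : ∀ i ≤ d, |t - x i| ≤ R) {i : ℕ} (hi : i ≤ d) :
    |(Lagrange.basis (Finset.range (d + 1)) x i).eval t| ≤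
      (R / δ) ^ d * ((i.factorial : ℝ) * (d - i).factorial)⁻¹ := by
  have hR₀ : 0 ≤ R := (abs_nonneg _).trans (hR 0 (Nat.zero_le d))
  have hcard : ((Finset.range (d + 1)).erase i).card = d := by
    rw [Finset.card_erase_of_mem (Finset.mem_range.2 (Nat.lt_succ_of_le hi))]; simp
  have factor_le : ∀ k ∈ (Finset.range (d + 1)).erase i,
      |(Lagrange.basisDivisor (x i) (x k)).eval t| ≤ R / δ * |(i : ℝ) - k|⁻¹ := by
    intro k hk
    have hkd : k ≤ d := Nat.lt_succ_iff.1 (Finset.mem_range.1 (Finset.mem_of_mem_erase hk))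
    have hik : 0 < |(i : ℝ) - k| :=
      abs_pos.2 (sub_ne_zero.2 (Nat.cast_injective.ne (Finset.ne_of_mem_erase hk).symm))
    simp only [Lagrange.basisDivisor, Polynomial.eval_mul, Polynomial.eval_C, Polynomial.eval_sub,
      Polynomial.eval_X, abs_mul, abs_inv]
    calc |x i - x k|⁻¹ * |t - x k| ≤ (|(i : ℝ) - k| * δ)⁻¹ * R := by
          gcongr
          · exact abs_sub_mul_le_of_separated hx hi hkd
          · exact hR k hkd
      _ = R / δ * |(i : ℝ) - k|⁻¹ := by rw [mul_inv]; ring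
  calc |(Lagrange.basis (Finset.range (d + 1)) x i).eval t|
      = ∏ k ∈ (Finset.range (d + 1)).erase i, |(Lagrange.basisDivisor (x i) (x k)).eval t| := by
        rw [Lagrange.basis, Polynomial.eval_prod, Finset.abs_prod]
    _ ≤ ∏ k ∈ (Finset.range (d + 1)).erase i, (R / δ * |(i : ℝ) - k|⁻¹) :=
        Finset.prod_le_prod (fun _ _ => abs_nonneg _) factor_le
    _ = _ := by
        rw [Finset.prod_mul_distrib, Finset.prod_const, hcard, Finset.prod_inv_distrib,
          prod_abs_sub_erase hi]

theorem abs_eval_le_of_separated {q : Polynomial ℝ} {d : ℕ} (hq : q.natDegree ≤ d) {δ c R t : ℝ}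
    (hδ : 0 < δ) {x : ℕ → ℝ} (hx : ∀ i < d, x i + δ ≤ x (i + 1))
    (hqx : ∀ i ≤ d, |q.eval (x i)| ≤ c) (hR : ∀ i ≤ d, |t - x i| ≤ R) :
    |q.eval t| ≤ c * ((2 * R / δ) ^ d / d.factorial) := by
  have hc : 0 ≤ c := (abs_nonneg _).trans (hqx 0 (Nat.zero_le d))
  have hle : ∀ i ∈ Finset.range (d + 1), i ≤ d := fun i hi =>
    Nat.lt_succ_iff.1 (Finset.mem_range.1 hi)
  have hinj : Set.InjOn x (Finset.range (d + 1) : Set ℕ) := by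
    intro i hi j hj hij
    have hsep := abs_sub_mul_le_of_separated hx (hle i hi) (hle j hj)
    rw [hij, sub_self, abs_zero] at hsep
    have : |(i : ℝ) - j| = 0 := le_antisymm (nonpos_of_mul_nonpos_left hsep hδ) (abs_nonneg _)
    exact Nat.cast_injective (sub_eq_zero.1 (abs_eq_zero.1 this))
  have hdeg : q.degree < (Finset.range (d + 1)).card := by
    rw [Finset.card_range]
    exact Polynomial.degree_le_natDegree.trans_lt (Nat.cast_lt.2 (Nat.lt_succ_of_le hq))
  have hinterp : q.eval t = ∑ i ∈ Finset.range (d + 1),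
      q.eval (x i) * (Lagrange.basis (Finset.range (d + 1)) x i).eval t := by
    conv_lhs => rw [Lagrange.eq_interpolate hinj hdeg, Lagrange.interpolate_apply]
    simp only [Polynomial.eval_finsetSum, Polynomial.eval_mul, Polynomial.eval_C]
  calc |q.eval t|
      ≤ ∑ i ∈ Finset.range (d + 1), |q.eval (x i) *
          (Lagrange.basis (Finset.range (d + 1)) x i).eval t| :=
        hinterp ▸ Finset.abs_sum_le_sum_abs _ _
    _ ≤ ∑ i ∈ Finset.range (d + 1),
          c * ((R / δ) ^ d * ((i.factorial : ℝ) * (d - i).factorial)⁻¹) := by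
        refine Finset.sum_le_sum fun i hi => ?_
        rw [abs_mul]
        exact mul_le_mul (hqx i (hle i hi))
          (abs_eval_lagrange_basis_le_of_separated hδ hx hR (hle i hi)) (abs_nonneg _) hc
    _ = c * ((2 * R / δ) ^ d / d.factorial) := by
        rw [← Finset.mul_sum, ← Finset.mul_sum, sum_inv_factorial_mul_factorial,
          show 2 * R / δ = R / δ * 2 by ring, mul_pow]
        ring

/-- A **Remez-type inequality**. -/
theorem abs_eval_le_of_lt_volume {q : Polynomial ℝ} {d : ℕ} (hd : 1 ≤ d) (hq : q.natDegree ≤ d)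
    {S : Set ℝ} {A c R t : ℝ} (hA : 0 < A) (hAS : ENNReal.ofReal A < volume S)
    (hqS : ∀ x ∈ S, |q.eval x| ≤ c) (hR : ∀ x ∈ S, |t - x| ≤ R) :
    |q.eval t| ≤ c * ((2 * R * d / A) ^ d / d.factorial) := by
  have hd₀ : (0 : ℝ) < d := by exact_mod_cast hd
  have hS : BddBelow S := ⟨t - R, fun x hx => by linarith [(le_abs_self _).trans (hR x hx)]⟩
  obtain ⟨x, hxS, hx⟩ := exists_separated_of_lt_volume (div_pos hA hd₀).le d hS
    (by rwa [mul_div_cancel₀ _ hd₀.ne'])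
  rw [← div_div_eq_mul_div]
  exact abs_eval_le_of_separated hq (div_pos hA hd₀) hx (fun i hi => hqS _ (hxS i hi))
    fun i hi => hR _ (hxS i hi)

end Remez

section SmallBall

theorem lintegral_exp_neg_abs_sub_div_le {τ : ℝ} (hτ : 0 < τ) (a : ℝ) :
    ∫⁻ x, ENNReal.ofReal (Real.exp (-(|x - a| / τ))) ≤ ENNReal.ofReal (2 * τ) := by
  have hpdf : Measurable fun x => exponentialPDF τ⁻¹ x :=
    (measurable_exponentialPDFReal τ⁻¹).ennreal_ofReal
  have exp_eq : ∀ y : ℝ, 0 ≤ y → ENNReal.ofReal (Real.exp (-(y / τ))) =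
      ENNReal.ofReal τ * exponentialPDF τ⁻¹ y := by
    intro y hy
    rw [exponentialPDF_eq, if_pos hy, ← ENNReal.ofReal_mul hτ.le]
    congr 1
    field_simp
  calc ∫⁻ x, ENNReal.ofReal (Real.exp (-(|x - a| / τ)))
      = ∫⁻ x, ENNReal.ofReal (Real.exp (-(|x| / τ))) :=
        lintegral_sub_right_eq_self (fun x => ENNReal.ofReal (Real.exp (-(|x| / τ)))) a
    _ ≤ ∫⁻ x, ENNReal.ofReal τ * (exponentialPDF τ⁻¹ x + exponentialPDF τ⁻¹ (-x)) := by
        refine lintegral_mono fun x => ?_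
        rcases le_total 0 x with hx | hx
        · rw [abs_of_nonneg hx, exp_eq x hx]
          gcongr
          exact le_self_add
        · rw [abs_of_nonpos hx, exp_eq (-x) (by linarith)]
          gcongr
          exact le_add_self
    _ = ENNReal.ofReal (2 * τ) := by
        rw [lintegral_const_mul' _ _ ENNReal.ofReal_ne_top, lintegral_add_left hpdf,
          lintegral_neg_eq_self (fun x => exponentialPDF τ⁻¹ x),
          lintegral_exponentialPDF_eq_one (inv_pos.2 hτ), mul_comm, ENNReal.ofReal_mul two_pos.le]
        norm_num

theorem exp_two_le : Real.exp 2 ≤ 8 :=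
  calc Real.exp 2 = Real.exp 1 ^ 2 := (Real.exp_one_pow 2).symm
    _ ≤ 2.7182818286 ^ 2 := by gcongr; exact Real.exp_one_lt_d9.le
    _ ≤ 8 := by norm_num

theorem four_le_exp_two : 4 ≤ Real.exp 2 :=
  calc (4 : ℝ) = 2 ^ 2 := by norm_num
    _ ≤ Real.exp 1 ^ 2 := by gcongr; exact Real.exp_one_gt_two.le
    _ = Real.exp 2 := Real.exp_one_pow 2

theorem exp_three_lt : Real.exp 3 < 32 :=
  calc Real.exp 3 = Real.exp 1 ^ 3 := (Real.exp_one_pow 3).symm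
    _ ≤ 3 ^ 3 := by gcongr; exact Real.exp_one_lt_three.le
    _ < 32 := by norm_num

theorem IsLogConcave.convex_superlevel {E : Type*} [AddCommGroup E] [Module ℝ E]
    {f : E → ℝ≥0∞} (hf : IsLogConcave f) (a : ℝ≥0∞) : Convex ℝ {x | a ≤ f x} := by
  refine convex_iff_forall_pos.2 fun x hx y hy r s hr hs hrs => ?_
  obtain rfl : r = 1 - s := by linarith
  calc a = a ^ (1 - s) * a ^ s := by
        rw [← ENNReal.rpow_add_of_nonneg _ _ hr.le hs.le, sub_add_cancel, ENNReal.rpow_one]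
    _ ≤ f x ^ (1 - s) * f y ^ s := by gcongr <;> assumption
    _ ≤ f ((1 - s) • x + s • y) := hf ⟨hs, by linarith⟩ x y

theorem IsLogConcave.mul_abs_sub_le_lintegral {f : ℝ → ℝ≥0∞} (hf : IsLogConcave f) {a : ℝ≥0∞}
    {x y : ℝ} (hx : a ≤ f x) (hy : a ≤ f y) : a * ENNReal.ofReal |y - x| ≤ ∫⁻ t, f t := by
  rw [← Real.volume_interval, ← setLIntegral_const, ← segment_eq_uIcc]
  exact (setLIntegral_mono' (segment_eq_uIcc x y ▸ measurableSet_uIcc)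
    ((hf.convex_superlevel a).segment_subset hx hy)).trans (setLIntegral_le_lintegral _ _)

/-- Otherwise `f` would stay above `M * exp (-3)` on a segment of length `τ` starting at `s₀`. -/
theorem IsLogConcave.le_ofReal_mul_exp {f : ℝ → ℝ≥0∞} (hf : IsLogConcave f) {M τ s₀ : ℝ}
    (hM : 0 < M) (hτ : 0 < τ) (hfM : ∀ x, f x ≤ ENNReal.ofReal M)
    (hs₀ : ENNReal.ofReal (M * Real.exp (-1)) ≤ f s₀)
    (hmass : ∫⁻ x, f x < ENNReal.ofReal (M * Real.exp (-3) * τ)) (x : ℝ) :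
    f x ≤ ENNReal.ofReal (M * Real.exp (2 - 2 * (|x - s₀| / τ))) := by
  rcases le_or_gt |x - s₀| τ with hx | hx
  · refine (hfM x).trans (ENNReal.ofReal_le_ofReal (le_mul_of_one_le_right hM.le ?_))
    exact Real.one_le_exp (by linarith [(div_le_one hτ).2 hx])
  by_contra! hlt
  have hD : 0 < |x - s₀| := hτ.trans hx
  set θ := τ / |x - s₀| with hθ
  have hθ₀ : 0 < θ := div_pos hτ hD
  have hθ₁ : θ < 1 := (div_lt_one hD).2 hx
  have hθD : θ * |x - s₀| = τ := div_mul_cancel₀ _ hD.ne'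
  have hfy : ENNReal.ofReal (M * Real.exp (-3)) ≤ f ((1 - θ) • s₀ + θ • x) := by
    calc ENNReal.ofReal (M * Real.exp (-3))
        ≤ ENNReal.ofReal ((M * Real.exp (-1)) ^ (1 - θ) *
            (M * Real.exp (2 - 2 * (|x - s₀| / τ))) ^ θ) := by
          refine ENNReal.ofReal_le_ofReal ?_
          rw [Real.mul_rpow hM.le (Real.exp_pos _).le, Real.mul_rpow hM.le (Real.exp_pos _).le,
            mul_mul_mul_comm, ← Real.rpow_add hM, ← Real.exp_mul, ← Real.exp_mul, ← Real.exp_add,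
            sub_add_cancel, Real.rpow_one]
          gcongr
          have : |x - s₀| / τ * θ = 1 := by rw [hθ]; field_simp
          linarith
      _ ≤ f s₀ ^ (1 - θ) * f x ^ θ := by
          rw [ENNReal.ofReal_mul (by positivity),
            ← ENNReal.ofReal_rpow_of_nonneg (by positivity) (by linarith),
            ← ENNReal.ofReal_rpow_of_nonneg (by positivity) hθ₀.le]
          gcongr
      _ ≤ _ := hf ⟨hθ₀, hθ₁⟩ s₀ x
  have hlen : |(1 - θ) • s₀ + θ • x - s₀| = τ := by
    rw [show (1 - θ) • s₀ + θ • x - s₀ = θ * (x - s₀) by simp only [smul_eq_mul]; ring, abs_mul,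
      abs_of_pos hθ₀, hθD]
  have hle := hf.mul_abs_sub_le_lintegral
    ((ENNReal.ofReal_le_ofReal (by gcongr; norm_num)).trans hs₀) hfy
  rw [hlen, ← ENNReal.ofReal_mul (by positivity)] at hle
  exact hle.not_gt hmass

theorem exists_lt_measure_inter_floor_eq {α : Type*} [MeasurableSpace α] {ν : Measure α}
    {E : Set α} (w : α → ℝ) {c : ℝ≥0∞} (hE : c < ν E) :
    ∃ j : ℕ, c * 2⁻¹ ^ (j + 1) < ν (E ∩ {x | ⌊w x⌋₊ = j}) := by
  by_contra! hle
  refine hE.not_ge ?_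
  calc ν E = ν (⋃ j : ℕ, E ∩ {x | ⌊w x⌋₊ = j}) := by congr 1; ext x; simp
    _ ≤ ∑' j : ℕ, c * 2⁻¹ ^ (j + 1) := (measure_iUnion_le _).trans (ENNReal.tsum_le_tsum hle)
    _ = c := by
        rw [ENNReal.tsum_mul_left, ENNReal.tsum_geometric_add_one, ENNReal.one_sub_inv_two, inv_inv,
          ENNReal.inv_mul_cancel two_ne_zero ENNReal.ofNat_ne_top, mul_one]

theorem exists_shell_of_lt_withDensity {f : ℝ → ℝ≥0∞} {a M τ s₀ : ℝ} (ha : 0 < a) (hM : 0 < M)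
    (hτ : 0 < τ) (hdecay : ∀ x, f x ≤ ENNReal.ofReal (M * Real.exp (2 - 2 * (|x - s₀| / τ))))
    {E : Set ℝ} (hE : MeasurableSet E)
    (haE : ENNReal.ofReal (a * (M * τ)) < volume.withDensity f E) :
    ∃ (j : ℕ) (S : Set ℝ), S ⊆ E ∧ (∀ x ∈ S, |x - s₀| ≤ τ * (j + 1)) ∧
      ENNReal.ofReal (a * τ * (j + 1) / 16) < volume S := by
  obtain ⟨j, hj⟩ := exists_lt_measure_inter_floor_eq (fun x => |x - s₀| / τ) haE
  have hw : Measurable fun x : ℝ => |x - s₀| / τ := by fun_prop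
  set S := E ∩ {x | ⌊|x - s₀| / τ⌋₊ = j}
  have hS : MeasurableSet S := hE.inter (Nat.measurable_floor.comp hw (measurableSet_singleton j))
  have shell : ∀ x ∈ S, (j : ℝ) ≤ |x - s₀| / τ ∧ |x - s₀| / τ < j + 1 := fun x hx =>
    (Nat.floor_eq_iff (by positivity)).1 hx.2
  refine ⟨j, S, Set.inter_subset_left, fun x hx => ?_, ?_⟩
  · exact ((div_lt_iff₀' hτ).1 (shell x hx).2).le
  have density_le : M * Real.exp (2 - 2 * j) ≤ M * (8 / 4 ^ j) := by
    rw [Real.exp_sub, mul_comm (2 : ℝ) j, Real.exp_nat_mul]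
    gcongr
    exacts [exp_two_le, four_le_exp_two]
  have mass_le : volume.withDensity f S ≤ ENNReal.ofReal (M * (8 / 4 ^ j)) * volume S := by
    rw [withDensity_apply _ hS, ← setLIntegral_const]
    refine setLIntegral_mono' hS fun x hx => (hdecay x).trans (ENNReal.ofReal_le_ofReal ?_)
    refine le_trans ?_ density_le
    gcongr
    exact (shell x hx).1
  by_contra! hvol
  refine (hj.trans_le (mass_le.trans (mul_le_mul_right hvol _))).not_ge ?_
  rw [← ENNReal.ofReal_mul (by positivity), ← ENNReal.ofReal_ofNat,
    ← ENNReal.ofReal_inv_of_pos two_pos, ← ENNReal.ofReal_pow (by positivity),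
    ← ENNReal.ofReal_mul (by positivity)]
  refine ENNReal.ofReal_le_ofReal ?_
  have hj2 : ((j : ℝ) + 1) ≤ 2 ^ j := by exact_mod_cast Nat.lt_two_pow_self (n := j)
  calc M * (8 / 4 ^ j) * (a * τ * (j + 1) / 16)
      ≤ M * (8 / 4 ^ j) * (a * τ * 2 ^ j / 16) := by gcongr
    _ = a * (M * τ) * 2⁻¹ ^ (j + 1) := by
        rw [show (4 : ℝ) ^ j = 2 ^ j * 2 ^ j by rw [← mul_pow]; norm_num, inv_pow, pow_succ]
        field_simp
        norm_num

theorem abs_eval_le_mul_exp_of_lt_withDensity {f : ℝ → ℝ≥0∞} {a M τ s₀ : ℝ} (ha : 0 < a)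
    (hM : 0 < M) (hτ : 0 < τ)
    (hdecay : ∀ x, f x ≤ ENNReal.ofReal (M * Real.exp (2 - 2 * (|x - s₀| / τ))))
    {q : Polynomial ℝ} {d : ℕ} (hd : 1 ≤ d) (hq : q.natDegree ≤ d) {c : ℝ} (hc : 0 ≤ c)
    (hE : ENNReal.ofReal (a * (M * τ)) < volume.withDensity f {x | |q.eval x| ≤ c}) (x : ℝ) :
    |q.eval x| ≤ c * (32 * d / a) ^ d * Real.exp (1 + |x - s₀| / τ) := by
  obtain ⟨j, S, hSE, hS, hvol⟩ := exists_shell_of_lt_withDensity ha hM hτ hdecay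
    (measurableSet_le (by fun_prop) measurable_const) hE
  set w := |x - s₀| / τ with hw
  have hw₀ : 0 ≤ w := by positivity
  have hR : ∀ y ∈ S, |x - y| ≤ τ * ((1 + w) * (j + 1)) := by
    intro y hy
    have hxs : |x - s₀| = τ * w := by rw [hw]; field_simp
    have hwj : 0 ≤ τ * (w * j) := by positivity
    have := abs_sub_le x s₀ y
    rw [abs_sub_comm s₀] at this
    linarith [hS y hy]
  calc |q.eval x|
      ≤ c * ((2 * (τ * ((1 + w) * (j + 1))) * d / (a * τ * (j + 1) / 16)) ^ d / d.factorial) :=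
        abs_eval_le_of_lt_volume hd hq (by positivity) hvol (fun y hy => hSE hy) hR
    _ = c * (32 * d / a) ^ d * ((1 + w) ^ d / d.factorial) := by
        rw [show 2 * (τ * ((1 + w) * (j + 1))) * d / (a * τ * (j + 1) / 16) =
          32 * d / a * (1 + w) by field_simp; norm_num, mul_pow]
        ring
    _ ≤ c * (32 * d / a) ^ d * Real.exp (1 + w) := by
        gcongr
        exact Real.pow_div_factorial_le_exp _ (by positivity) d

theorem lintegral_abs_eval_le_of_exp_decay {f : ℝ → ℝ≥0∞} (hf : Measurable f) {a M τ s₀ : ℝ}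
    (ha : 0 < a) (hM : 0 < M) (hτ : 0 < τ)
    (hdecay : ∀ x, f x ≤ ENNReal.ofReal (M * Real.exp (2 - 2 * (|x - s₀| / τ))))
    {q : Polynomial ℝ} {d : ℕ} (hd : 1 ≤ d) (hq : q.natDegree ≤ d) {c : ℝ} (hc : 0 ≤ c)
    (hE : ENNReal.ofReal (a * (M * τ)) < volume.withDensity f {x | |q.eval x| ≤ c}) :
    ∫⁻ x, ENNReal.ofReal |q.eval x| ∂(volume.withDensity f) ≤
      ENNReal.ofReal (c * (32 * d / a) ^ d * (64 * (M * τ))) := by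
  have hq_le := abs_eval_le_mul_exp_of_lt_withDensity ha hM hτ hdecay hd hq hc hE
  set B := c * (32 * d / a) ^ d
  have hB₀ : 0 ≤ B := by positivity
  have integrand_le : ∀ x, f x * ENNReal.ofReal |q.eval x| ≤
      ENNReal.ofReal (B * (M * Real.exp 3)) * ENNReal.ofReal (Real.exp (-(|x - s₀| / τ))) := by
    intro x
    refine (mul_le_mul' (hdecay x) (ENNReal.ofReal_le_ofReal (hq_le x))).trans_eq ?_
    rw [← ENNReal.ofReal_mul (by positivity), ← ENNReal.ofReal_mul (by positivity),
      mul_mul_mul_comm, ← Real.exp_add, ← mul_assoc B, mul_assoc (B * M), ← Real.exp_add]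
    ring_nf
  calc ∫⁻ x, ENNReal.ofReal |q.eval x| ∂(volume.withDensity f)
      = ∫⁻ x, f x * ENNReal.ofReal |q.eval x| :=
        lintegral_withDensity_eq_lintegral_mul _ hf (by fun_prop)
    _ ≤ ENNReal.ofReal (B * (M * Real.exp 3)) * ENNReal.ofReal (2 * τ) := by
        refine (lintegral_mono integrand_le).trans ?_
        rw [lintegral_const_mul' _ _ ENNReal.ofReal_ne_top]
        gcongr
        exact lintegral_exp_neg_abs_sub_div_le hτ s₀
    _ ≤ ENNReal.ofReal (B * (64 * (M * τ))) := by
        rw [← ENNReal.ofReal_mul (by positivity)]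
        refine ENNReal.ofReal_le_ofReal ?_
        have := mul_le_mul_of_nonneg_left exp_three_lt.le (by positivity : 0 ≤ 2 * (B * (M * τ)))
        linarith

theorem IsLogConcave.exists_exp_decay {f : ℝ → ℝ≥0∞} (hf : IsLogConcave f)
    (hbdd : ⨆ x, f x ≠ ∞) {m : ℝ} (hm : 0 < m) (hfm : ∫⁻ x, f x = ENNReal.ofReal m) :
    ∃ M τ s₀ : ℝ, 0 < M ∧ 0 < τ ∧ M * τ = 32 * m ∧
      ∀ x, f x ≤ ENNReal.ofReal (M * Real.exp (2 - 2 * (|x - s₀| / τ))) := by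
  obtain ⟨M, hM⟩ : ∃ M, M = (⨆ x, f x).toReal := ⟨_, rfl⟩
  have hsup : ⨆ x, f x = ENNReal.ofReal M := by rw [hM, ENNReal.ofReal_toReal hbdd]
  have hM₀ : 0 < M := by
    by_contra! hM₀
    have hzero : ∀ x, f x = 0 := ENNReal.iSup_eq_zero.1 (hsup.trans (ENNReal.ofReal_of_nonpos hM₀))
    simp only [hzero, lintegral_zero] at hfm
    exact (ENNReal.ofReal_pos.2 hm).ne hfm
  obtain ⟨s₀, hs₀⟩ : ∃ s₀, ENNReal.ofReal (M * Real.exp (-1)) < f s₀ := by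
    rw [← lt_iSup_iff, hsup, ENNReal.ofReal_lt_ofReal_iff hM₀]
    exact mul_lt_of_lt_one_right hM₀ (Real.exp_lt_one_iff.2 (by norm_num))
  have hMτ : M * (32 * m / M) = 32 * m := by field_simp
  refine ⟨M, 32 * m / M, s₀, hM₀, by positivity, hMτ, hf.le_ofReal_mul_exp hM₀ (by positivity)
    (fun x => (le_iSup f x).trans hsup.le) hs₀.le ?_⟩
  rw [hfm, ENNReal.ofReal_lt_ofReal_iff (by positivity), mul_right_comm, hMτ, Real.exp_neg,
    ← div_eq_mul_inv, lt_div_iff₀ (Real.exp_pos 3), mul_comm]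
  exact mul_lt_mul_of_pos_right exp_three_lt hm

theorem lintegral_abs_eval_le_of_isLogConcave {f : ℝ → ℝ≥0∞} (hf : Measurable f)
    (hlc : IsLogConcave f) (hbdd : ⨆ x, f x ≠ ∞) {q : Polynomial ℝ} {d : ℕ} (hd : 1 ≤ d)
    (hq : q.natDegree ≤ d) {b c : ℝ} (hb : 0 < b) (hc : 0 ≤ c)
    (hE : ENNReal.ofReal b * ∫⁻ x, f x < volume.withDensity f {x | |q.eval x| ≤ c}) :
    ∫⁻ x, ENNReal.ofReal |q.eval x| ∂(volume.withDensity f) ≤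
      ENNReal.ofReal (c * (2 ^ 21 * d / b) ^ d) * ∫⁻ x, f x := by
  have hmass : volume.withDensity f {x | |q.eval x| ≤ c} ≤ ∫⁻ x, f x := by
    rw [← setLIntegral_univ f, ← withDensity_apply _ .univ]
    exact measure_mono (Set.subset_univ _)
  have hfin : ∫⁻ x, f x ≠ ∞ := by
    intro htop
    rw [htop, ENNReal.mul_top (ENNReal.ofReal_pos.2 hb).ne'] at hE
    exact not_top_lt hE
  obtain ⟨m, hm⟩ : ∃ m, m = (∫⁻ x, f x).toReal := ⟨_, rfl⟩
  have hfm : ∫⁻ x, f x = ENNReal.ofReal m := by rw [hm, ENNReal.ofReal_toReal hfin]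
  have hm₀ : 0 < m := hm ▸ ENNReal.toReal_pos (hE.bot_lt.trans_le hmass).ne' hfin
  obtain ⟨M, τ, s₀, hM, hτ, hMτ, hdecay⟩ := hlc.exists_exp_decay hbdd hm₀ hfm
  calc ∫⁻ x, ENNReal.ofReal |q.eval x| ∂(volume.withDensity f)
      ≤ ENNReal.ofReal (c * (32 * d / (b / 32)) ^ d * (64 * (M * τ))) := by
        refine lintegral_abs_eval_le_of_exp_decay hf (by positivity) hM hτ hdecay hd hq hc ?_
        rwa [hMτ, show b / 32 * (32 * m) = b * m by ring, ENNReal.ofReal_mul hb.le, ← hfm]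
    _ ≤ ENNReal.ofReal (c * (2 ^ 21 * d / b) ^ d) * ∫⁻ x, f x := by
        rw [hfm, ← ENNReal.ofReal_mul (by positivity)]
        refine ENNReal.ofReal_le_ofReal ?_
        calc c * (32 * d / (b / 32)) ^ d * (64 * (M * τ))
            = c * (2 ^ 10 * d / b) ^ d * 2 ^ 11 * m := by rw [hMτ, div_div_eq_mul_div]; ring
          _ ≤ c * (2 ^ 10 * d / b) ^ d * (2 ^ 11) ^ d * m := by
              gcongr
              exact le_self_pow₀ (by norm_num) (by omega)
          _ = c * (2 ^ 21 * d / b) ^ d * m := by rw [mul_assoc c, ← mul_pow]; ring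

end SmallBall

section AbsoluteContinuity

theorem gaussianN_absolutelyContinuous : ∀ n : ℕ, gaussianN n ≪ volume
  | 0 => by
    rw [gaussianN, volume_pi, Measure.pi_of_empty, Measure.pi_of_empty]
  | n + 1 => by
    have hvol := volume_preserving_piFinSuccAbove (fun _ : Fin (n + 1) => ℝ) 0
    rw [← (measurePreserving_insertNthLinearMap_gaussianN 0).map_eq, ← hvol.symm.map_eq]
    exact ((gaussianReal_absolutelyContinuous 0 one_ne_zero).prod
      (gaussianN_absolutelyContinuous n)).map hvol.symm.measurable

theorem addHaar_setOf_linearMap_eq {E : Type*} [NormedAddCommGroup E] [NormedSpace ℝ E]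
    [MeasurableSpace E] [BorelSpace E] [FiniteDimensional ℝ E] (μ : Measure E)
    [μ.IsAddHaarMeasure] {f : E →ₗ[ℝ] ℝ} (hf : f ≠ 0) (c : ℝ) : μ {x | f x = c} = 0 := by
  rcases Set.eq_empty_or_nonempty {x | f x = c} with h | ⟨p, hp⟩
  · rw [h, measure_empty]
  · have hlevel : {x | f x = c} = AffineSubspace.mk' p (LinearMap.ker f) := by
      ext x
      simp [AffineSubspace.mem_mk', sub_eq_zero, hp.out]
    rw [hlevel]
    refine Measure.addHaar_affineSubspace μ _ fun htop => hf (LinearMap.ker_eq_top.1 ?_)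
    rw [← AffineSubspace.direction_mk' p (LinearMap.ker f), htop, AffineSubspace.direction_top]

end AbsoluteContinuity

section Localization

variable {ι : Type*}

/-- The affine form `x ↦ cos θ · (x i - r) + sin θ · (x j - s)`. As `θ` varies, the half-spaces
`{x | 0 ≤ planarForm i j r s θ x}` rotate about the codimension-two flat `x i = r, x j = s`. -/
noncomputable def planarForm (i j : ι) (r s θ : ℝ) (x : ι → ℝ) : ℝ :=
  Real.cos θ * (x i - r) + Real.sin θ * (x j - s)

theorem continuous_planarForm (i j : ι) (r s θ : ℝ) : Continuous (planarForm i j r s θ) := by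
  unfold planarForm; fun_prop

theorem planarForm_add_pi (i j : ι) (r s θ : ℝ) (x : ι → ℝ) :
    planarForm i j r s (θ + Real.pi) x = -planarForm i j r s θ x := by
  simp only [planarForm, Real.cos_add_pi, Real.sin_add_pi]; ring

theorem convex_setOf_planarForm_nonneg (i j : ι) (r s θ : ℝ) :
    Convex ℝ {x | 0 ≤ planarForm i j r s θ x} := by
  intro x hx y hy a b ha hb hab
  have hcomb : planarForm i j r s θ (a • x + b • y) =
      a * planarForm i j r s θ x + b * planarForm i j r s θ y := by
    simp only [planarForm, Pi.add_apply, Pi.smul_apply, smul_eq_mul]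
    linear_combination (Real.cos θ * r + Real.sin θ * s) * hab
  rw [Set.mem_ofPred_eq, hcomb]
  exact add_nonneg (mul_nonneg ha hx) (mul_nonneg hb hy)

theorem ae_planarForm_ne_zero [Fintype ι] {μ : Measure (ι → ℝ)} (hμ : μ ≪ volume) {i j : ι}
    (hij : i ≠ j) (r s θ : ℝ) : ∀ᵐ x ∂μ, planarForm i j r s θ x ≠ 0 := by
  classical
  let f : (ι → ℝ) →ₗ[ℝ] ℝ := Real.cos θ • LinearMap.proj i + Real.sin θ • LinearMap.proj j
  have hf : f ≠ 0 := fun h0 => by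
    have hcos : Real.cos θ = 0 := by simpa [f, hij] using LinearMap.congr_fun h0 (Pi.single i 1)
    have hsin : Real.sin θ = 0 := by
      simpa [f, hij.symm] using LinearMap.congr_fun h0 (Pi.single j 1)
    simpa [hcos, hsin] using Real.sin_sq_add_cos_sq θ
  refine hμ.ae_le (measure_mono_null (fun x hx => ?_) (addHaar_setOf_linearMap_eq volume hf
    (Real.cos θ * r + Real.sin θ * s)))
  have hx0 : planarForm i j r s θ x = 0 := not_not.1 hx
  simp only [planarForm] at hx0
  change Real.cos θ * x i + Real.sin θ * x j = _
  linarith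

theorem continuousAt_indicator_nonneg {Θ α : Type*} [TopologicalSpace Θ] {g : Θ → α → ℝ} {x : α}
    (hg : Continuous fun θ => g θ x) (u : α → ℝ) {θ₀ : Θ} (h : g θ₀ x ≠ 0) :
    ContinuousAt (fun θ => {x | 0 ≤ g θ x}.indicator u x) θ₀ := by
  rcases lt_or_gt_of_ne h with h | h
  · refine continuousAt_const.congr (f := fun _ => 0) ?_
    filter_upwards [hg.continuousAt.eventually_lt continuousAt_const h] with θ hθ
    exact (Set.indicator_of_notMem (s := {x | 0 ≤ g θ x}) (not_le.2 hθ) u).symm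
  · refine continuousAt_const.congr (f := fun _ => u x) ?_
    filter_upwards [continuousAt_const.eventually_lt hg.continuousAt h] with θ hθ
    exact (Set.indicator_of_mem (s := {x | 0 ≤ g θ x}) hθ.le u).symm

theorem continuous_setIntegral_nonneg {Θ α : Type*} [TopologicalSpace Θ] [FirstCountableTopology Θ]
    [MeasurableSpace α] {μ : Measure α} {g : Θ → α → ℝ} (hg : ∀ θ, Measurable (g θ))
    (hcont : ∀ x, Continuous fun θ => g θ x) (hnull : ∀ θ, ∀ᵐ x ∂μ, g θ x ≠ 0) {u : α → ℝ}
    (hu : Integrable u μ) : Continuous fun θ => ∫ x in {x | 0 ≤ g θ x}, u x ∂μ := by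
  have hmeas θ : MeasurableSet {x | 0 ≤ g θ x} := measurableSet_le measurable_const (hg θ)
  simp_rw [← integral_indicator (hmeas _)]
  refine continuous_iff_continuousAt.2 fun θ₀ => continuousAt_of_dominated
    (.of_forall fun θ => hu.aestronglyMeasurable.indicator (hmeas θ))
    (.of_forall fun θ => ae_of_all _ fun x => norm_indicator_le_norm_self _ _) hu.norm ?_
  filter_upwards [hnull θ₀] with x hx
  exact continuousAt_indicator_nonneg (hcont x) u hx

theorem setIntegral_planarForm_add_pi [Fintype ι] {μ : Measure (ι → ℝ)} (hμ : μ ≪ volume) {i j : ι}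
    (hij : i ≠ j) (r s θ : ℝ) {u : (ι → ℝ) → ℝ} (hu : Integrable u μ) :
    ∫ x in {x | 0 ≤ planarForm i j r s θ x}, u x ∂μ +
      ∫ x in {x | 0 ≤ planarForm i j r s (θ + Real.pi) x}, u x ∂μ = ∫ x, u x ∂μ := by
  have hmeas : MeasurableSet {x | 0 ≤ planarForm i j r s θ x} :=
    measurableSet_le measurable_const (continuous_planarForm i j r s θ).measurable
  rw [← integral_add_compl hmeas hu]
  congr 1
  refine setIntegral_congr_set ?_
  filter_upwards [ae_planarForm_ne_zero hμ hij r s θ] with x hx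
  refine propext ?_
  change 0 ≤ planarForm i j r s (θ + Real.pi) x ↔ ¬ 0 ≤ planarForm i j r s θ x
  rw [planarForm_add_pi, not_le, neg_nonneg]
  exact hx.le_iff_lt

/-- Rotating the half-space by `π` swaps the two halves, so some rotation splits `∫ u` evenly; the
half carrying the larger share of `∫ v` is the desired one. -/
theorem exists_planarForm_bisection [Fintype ι] {μ : Measure (ι → ℝ)} (hμ : μ ≪ volume) {i j : ι}
    (hij : i ≠ j) (r s : ℝ) {u v : (ι → ℝ) → ℝ} (hu : Integrable u μ) (hv : Integrable v μ)
    (hu0 : 0 ≤ ∫ x, u x ∂μ) (hv0 : 0 < ∫ x, v x ∂μ) :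
    ∃ θ, 0 ≤ ∫ x in {x | 0 ≤ planarForm i j r s θ x}, u x ∂μ ∧
      0 < ∫ x in {x | 0 ≤ planarForm i j r s θ x}, v x ∂μ := by
  set U : ℝ → ℝ := fun θ => ∫ x in {x | 0 ≤ planarForm i j r s θ x}, u x ∂μ
  have hUc : Continuous U := continuous_setIntegral_nonneg
    (fun θ => (continuous_planarForm i j r s θ).measurable)
    (fun x => by unfold planarForm; fun_prop) (ae_planarForm_ne_zero hμ hij r s) hu
  have hUpi θ : U θ + U (θ + Real.pi) = ∫ x, u x ∂μ :=
    setIntegral_planarForm_add_pi hμ hij r s θ hu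
  obtain ⟨θ, hθ⟩ : ∃ θ, U θ = (∫ x, u x ∂μ) / 2 := by
    have h0 := hUpi 0
    rcases le_total (U 0) ((∫ x, u x ∂μ) / 2) with h | h
    · exact mem_range_of_exists_le_of_exists_ge hUc ⟨0, h⟩ ⟨0 + Real.pi, by linarith⟩
    · exact mem_range_of_exists_le_of_exists_ge hUc ⟨0 + Real.pi, by linarith⟩ ⟨0, h⟩
  have hθ' := hUpi θ
  have hvpi := setIntegral_planarForm_add_pi hμ hij r s θ hv
  by_cases h : 0 < ∫ x in {x | 0 ≤ planarForm i j r s θ x}, v x ∂μ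
  · exact ⟨θ, by linarith, h⟩
  · exact ⟨θ + Real.pi, by linarith, by linarith⟩

/-- A nonnegative affine form vanishing at an interior point of a triangle vanishes on all of it,
which is impossible for a nondegenerate planar triangle. -/
theorem det_eq_zero_of_planarForm_nonneg {i j : ι} {a b c : ι → ℝ} {r s θ B G : ℝ} (hB : 0 < B)
    (hG : 0 < G) (hBG : B + G < 1) (hr : r - a i = B * (b i - a i) + G * (c i - a i))
    (hs : s - a j = B * (b j - a j) + G * (c j - a j)) (ha : 0 ≤ planarForm i j r s θ a)
    (hb : 0 ≤ planarForm i j r s θ b) (hc : 0 ≤ planarForm i j r s θ c) :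
    (b i - a i) * (c j - a j) - (b j - a j) * (c i - a i) = 0 := by
  have hpos : 0 < 1 - B - G := by linarith
  have hcomb : (1 - B - G) * planarForm i j r s θ a + B * planarForm i j r s θ b +
      G * planarForm i j r s θ c = 0 := by
    unfold planarForm
    linear_combination (-Real.cos θ) * hr + (-Real.sin θ) * hs
  have na := mul_nonneg hpos.le ha
  have nb := mul_nonneg hB.le hb
  have nc := mul_nonneg hG.le hc
  have za : planarForm i j r s θ a = 0 :=
    (mul_eq_zero.1 (show (1 - B - G) * _ = 0 by linarith)).resolve_left hpos.ne'
  have zb : planarForm i j r s θ b = 0 :=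
    (mul_eq_zero.1 (show B * _ = 0 by linarith)).resolve_left hB.ne'
  have zc : planarForm i j r s θ c = 0 :=
    (mul_eq_zero.1 (show G * _ = 0 by linarith)).resolve_left hG.ne'
  unfold planarForm at za zb zc
  linear_combination
    (Real.cos θ * ((c j - a j) * (zb - za) - (b j - a j) * (zc - za)) +
      Real.sin θ * ((b i - a i) * (zc - za) - (c i - a i) * (zb - za))) -
    ((b i - a i) * (c j - a j) - (b j - a j) * (c i - a i)) * Real.sin_sq_add_cos_sq θ

theorem exists_rat_mem_open_triangle {a b c : ℝ × ℝ}
    (hdet : (b.1 - a.1) * (c.2 - a.2) - (b.2 - a.2) * (c.1 - a.1) ≠ 0) :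
    ∃ (r s : ℚ) (B G : ℝ), 0 < B ∧ 0 < G ∧ B + G < 1 ∧
      r - a.1 = B * (b.1 - a.1) + G * (c.1 - a.1) ∧
      s - a.2 = B * (b.2 - a.2) + G * (c.2 - a.2) := by
  set D := (b.1 - a.1) * (c.2 - a.2) - (b.2 - a.2) * (c.1 - a.1) with hD
  -- Cramer's rule gives the barycentric coordinates of `p` with respect to `b` and `c`.
  let B : ℝ × ℝ → ℝ := fun p => ((p.1 - a.1) * (c.2 - a.2) - (p.2 - a.2) * (c.1 - a.1)) / D
  let G : ℝ × ℝ → ℝ := fun p => ((b.1 - a.1) * (p.2 - a.2) - (b.2 - a.2) * (p.1 - a.1)) / D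
  have hBc : Continuous B := by fun_prop
  have hGc : Continuous G := by fun_prop
  have hopen : IsOpen {p | 0 < B p ∧ 0 < G p ∧ B p + G p < 1} :=
    (isOpen_lt continuous_const hBc).inter
      ((isOpen_lt continuous_const hGc).inter (isOpen_lt (hBc.add hGc) continuous_const))
  have hcentroid : {p | 0 < B p ∧ 0 < G p ∧ B p + G p < 1}.Nonempty := by
    refine ⟨((a.1 + b.1 + c.1) / 3, (a.2 + b.2 + c.2) / 3), ?_⟩
    have hB : B ((a.1 + b.1 + c.1) / 3, (a.2 + b.2 + c.2) / 3) = 1 / 3 := by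
      simp only [B]; rw [div_eq_div_iff hdet three_ne_zero, hD]; ring
    have hG : G ((a.1 + b.1 + c.1) / 3, (a.2 + b.2 + c.2) / 3) = 1 / 3 := by
      simp only [G]; rw [div_eq_div_iff hdet three_ne_zero, hD]; ring
    simp only [Set.mem_ofPred_eq, hB, hG]
    norm_num
  obtain ⟨⟨r, s⟩, hB, hG, hBG⟩ :=
    (Rat.denseRange_cast.prodMap Rat.denseRange_cast).exists_mem_open hopen hcentroid
  refine ⟨r, s, B (r, s), G (r, s), hB, hG, hBG, ?_, ?_⟩ <;>
  · simp only [B, G]; field_simp; rw [hD]; ring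

theorem exists_line_of_planarForm_nonneg [Nonempty ι] {T : Set (ι → ℝ)}
    (h : ∀ i j : ι, i ≠ j → ∀ r s : ℚ, ∃ θ, ∀ x ∈ T, 0 ≤ planarForm i j r s θ x) :
    ∃ (k : ι) (p w : ι → ℝ), ∀ x ∈ T, x = p + (x k - p k) • w := by
  by_cases hT : T.Subsingleton
  · obtain ⟨k⟩ := ‹Nonempty ι›
    rcases T.eq_empty_or_nonempty with rfl | ⟨p, hp⟩
    · exact ⟨k, 0, 0, by simp⟩
    · exact ⟨k, p, 0, fun x hx => by rw [hT hx hp]; simp⟩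
  obtain ⟨a, ha, b, hb, hab⟩ := Set.not_subsingleton_iff.1 hT
  obtain ⟨k, hk⟩ := Function.ne_iff.1 hab
  have hk' : b k - a k ≠ 0 := sub_ne_zero.2 (Ne.symm hk)
  refine ⟨k, a, (b k - a k)⁻¹ • (b - a), fun x hx => funext fun j => ?_⟩
  have hdet : (b k - a k) * (x j - a j) - (b j - a j) * (x k - a k) = 0 := by
    by_cases hkj : k = j
    · subst hkj; ring
    by_contra hD
    obtain ⟨r, s, B, G, hB, hG, hBG, hr, hs⟩ :=
      exists_rat_mem_open_triangle (a := (a k, a j)) (b := (b k, b j)) (c := (x k, x j)) hD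
    obtain ⟨θ, hθ⟩ := h k j hkj r s
    exact hD (det_eq_zero_of_planarForm_nonneg hB hG hBG hr hs (hθ a ha) (hθ b hb) (hθ x hx))
  simp only [Pi.add_apply, Pi.smul_apply, Pi.sub_apply, smul_eq_mul]
  field_simp
  linear_combination hdet

theorem exists_antitone_seq_forall {α Q : Type*} [Preorder α] [Countable Q] {P : α → Prop}
    {R : Q → α → Prop} (step : ∀ a, P a → ∀ q, ∃ b ≤ a, P b ∧ R q b) {a₀ : α} (h₀ : P a₀) :
    ∃ s : ℕ → α, Antitone s ∧ (∀ m, P (s m)) ∧ ∀ q, ∃ m, R q (s m) := by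
  rcases isEmpty_or_nonempty Q with _ | _
  · exact ⟨fun _ => a₀, antitone_const, fun _ => h₀, isEmptyElim⟩
  choose! next hle hP hR using step
  obtain ⟨e, he⟩ := exists_surjective_nat Q
  let s : ℕ → α := Nat.rec a₀ fun m a => next a (e m)
  have hs : ∀ m, P (s m) := Nat.rec h₀ fun m ih => hP _ ih _
  refine ⟨s, antitone_nat_of_succ_le fun m => hle _ (hs m) _, hs, fun q => ?_⟩
  obtain ⟨m, rfl⟩ := he q
  exact ⟨m + 1, hR _ (hs m) _⟩

/-- **Lovász–Simonovits localization**. Cutting by bisecting half-spaces about all rational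
codimension-two flats shrinks a convex body to a line while preserving both inequalities. -/
theorem exists_antitone_convex_iInter_subset_line [Fintype ι] [Nonempty ι] {μ : Measure (ι → ℝ)}
    (hμ : μ ≪ volume) {u v : (ι → ℝ) → ℝ} {K₀ : Set (ι → ℝ)} (hK₀ : IsCompact K₀)
    (hK₀c : Convex ℝ K₀) (hu : IntegrableOn u K₀ μ) (hv : IntegrableOn v K₀ μ)
    (hu0 : 0 ≤ ∫ x in K₀, u x ∂μ) (hv0 : 0 < ∫ x in K₀, v x ∂μ) :
    ∃ K : ℕ → Set (ι → ℝ), Antitone K ∧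
      (∀ m, K m ⊆ K₀ ∧ IsCompact (K m) ∧ Convex ℝ (K m) ∧
        0 ≤ ∫ x in K m, u x ∂μ ∧ 0 < ∫ x in K m, v x ∂μ) ∧
      ∃ (k : ι) (p w : ι → ℝ), ∀ x ∈ ⋂ m, K m, x = p + (x k - p k) • w := by
  let P : Set (ι → ℝ) → Prop := fun K => K ⊆ K₀ ∧ IsCompact K ∧ Convex ℝ K ∧
    0 ≤ ∫ x in K, u x ∂μ ∧ 0 < ∫ x in K, v x ∂μ
  have step : ∀ K, P K → ∀ q : {p : ι × ι // p.1 ≠ p.2} × ℚ × ℚ, ∃ K' ≤ K, P K' ∧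
      ∃ θ, ∀ x ∈ K', 0 ≤ planarForm q.1.1.1 q.1.1.2 q.2.1 q.2.2 θ x := by
    rintro K ⟨hK, hKcpt, hKc, hKu, hKv⟩ ⟨⟨⟨i, j⟩, hij⟩, r, s⟩
    obtain ⟨θ, hθu, hθv⟩ := exists_planarForm_bisection
      (Measure.restrict_le_self.absolutelyContinuous.trans hμ) hij r s
      (hu.mono_set hK) (hv.mono_set hK) hKu hKv
    have hclosed : IsClosed {x | 0 ≤ planarForm i j r s θ x} :=
      isClosed_le continuous_const (continuous_planarForm i j r s θ)
    rw [Measure.restrict_restrict hclosed.measurableSet, Set.inter_comm] at hθu hθv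
    exact ⟨_, Set.inter_subset_left, ⟨Set.inter_subset_left.trans hK, hKcpt.inter_right hclosed,
      hKc.inter (convex_setOf_planarForm_nonneg i j r s θ), hθu, hθv⟩, θ, fun x hx => hx.2⟩
  obtain ⟨K, hanti, hP, hform⟩ :=
    exists_antitone_seq_forall step (show P K₀ from ⟨subset_rfl, hK₀, hK₀c, hu0, hv0⟩)
  refine ⟨K, hanti, hP, exists_line_of_planarForm_nonneg fun i j hij r s => ?_⟩
  obtain ⟨m, θ, hθ⟩ := hform (⟨(i, j), hij⟩, r, s)
  exact ⟨θ, fun x hx => hθ x (Set.mem_iInter.1 hx m)⟩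

theorem exists_convex_near_line [Fintype ι] [Nonempty ι] {μ : Measure (ι → ℝ)} (hμ : μ ≪ volume)
    {u v F : (ι → ℝ) → ℝ} {K₀ : Set (ι → ℝ)} (hK₀ : IsCompact K₀) (hK₀c : Convex ℝ K₀)
    (hu : IntegrableOn u K₀ μ) (hv : IntegrableOn v K₀ μ) (hu0 : 0 ≤ ∫ x in K₀, u x ∂μ)
    (hv0 : 0 < ∫ x in K₀, v x ∂μ) (hF : Continuous F) {η : ℝ} (hη : 0 < η) :
    ∃ K ⊆ K₀, IsCompact K ∧ Convex ℝ K ∧ 0 ≤ ∫ x in K, u x ∂μ ∧ 0 < ∫ x in K, v x ∂μ ∧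
      ∃ (k : ι) (p w : ι → ℝ), ∀ x ∈ K, |F x - F (p + (x k - p k) • w)| < η := by
  obtain ⟨K, hanti, hK, k, p, w, hline⟩ :=
    exists_antitone_convex_iInter_subset_line hμ hK₀ hK₀c hu hv hu0 hv0
  have hopen : IsOpen {x : ι → ℝ | |F x - F (p + (x k - p k) • w)| < η} :=
    isOpen_lt (by fun_prop) continuous_const
  obtain ⟨m, hm⟩ := exists_subset_nhds_of_isCompact hanti.directed_ge (fun m => (hK m).2.1)
    fun x hx => hopen.mem_nhds (by rwa [Set.mem_ofPred_eq, ← hline x hx, sub_self, abs_zero])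
  obtain ⟨hsub, hcpt, hconv, hKu, hKv⟩ := hK m
  exact ⟨K m, hsub, hcpt, hconv, hKu, hKv, k, p, w, hm⟩

theorem exists_convex_near_line_of_average [Fintype ι] [Nonempty ι] {μ : Measure (ι → ℝ)}
    [IsFiniteMeasure μ] (hμ : μ ≪ volume) {u v F : (ι → ℝ) → ℝ} {K₀ : Set (ι → ℝ)}
    (hK₀ : IsCompact K₀) (hK₀c : Convex ℝ K₀) (hu : IntegrableOn u K₀ μ)
    (hv : IntegrableOn v K₀ μ) {a b : ℝ} (hua : a * μ.real K₀ ≤ ∫ x in K₀, u x ∂μ)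
    (hvb : b * μ.real K₀ < ∫ x in K₀, v x ∂μ) (hF : Continuous F) {η : ℝ} (hη : 0 < η) :
    ∃ K, IsCompact K ∧ Convex ℝ K ∧ a * μ.real K ≤ ∫ x in K, u x ∂μ ∧
      b * μ.real K < ∫ x in K, v x ∂μ ∧
      ∃ (k : ι) (p w : ι → ℝ), ∀ x ∈ K, |F x - F (p + (x k - p k) • w)| < η := by
  have hsub {f : (ι → ℝ) → ℝ} (r : ℝ) {K : Set (ι → ℝ)} (hf : IntegrableOn f K μ) :
      ∫ x in K, (f x - r) ∂μ = ∫ x in K, f x ∂μ - r * μ.real K := by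
    rw [integral_sub hf (integrable_const r), setIntegral_const, smul_eq_mul, mul_comm r]
  obtain ⟨K, hK, hKcpt, hKc, hKu, hKv, hnear⟩ := exists_convex_near_line hμ hK₀ hK₀c
    (u := fun x => u x - a) (v := fun x => v x - b) (hu.sub (integrable_const a))
    (hv.sub (integrable_const b)) (by rwa [hsub a hu, sub_nonneg]) (by rwa [hsub b hv, sub_pos])
    hF hη
  rw [hsub a (hu.mono_set hK), sub_nonneg] at hKu
  rw [hsub b (hv.mono_set hK), sub_pos] at hKv
  exact ⟨K, hKcpt, hKc, hKu, hKv, hnear⟩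

end Localization

section CarberyWright

/-- `F` restricts to a polynomial of degree at most `d` on every line: all that the localization
argument needs to know about a polynomial of degree at most `d`. -/
def IsPolynomialOnLines {E : Type*} [AddCommGroup E] [Module ℝ E] (d : ℕ) (F : E → ℝ) : Prop :=
  ∀ a b : E, ∃ q : Polynomial ℝ, q.natDegree ≤ d ∧ ∀ s : ℝ, F (a + s • b) = q.eval s

theorem setLIntegral_abs_eval_coord_le {n : ℕ} (k : Fin (n + 1)) {K : Set (Fin (n + 1) → ℝ)}
    (hK : MeasurableSet K) (hKc : Convex ℝ K) {q : Polynomial ℝ} {d : ℕ} (hd : 1 ≤ d)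
    (hq : q.natDegree ≤ d) {b c : ℝ} (hb : 0 < b) (hc : 0 ≤ c)
    (hE : ENNReal.ofReal b * gaussianN (n + 1) K <
      gaussianN (n + 1) (K ∩ {x | |q.eval (x k)| ≤ c})) :
    ∫⁻ x in K, ENNReal.ofReal |q.eval (x k)| ∂(gaussianN (n + 1)) ≤
      ENNReal.ofReal (c * (2 ^ 21 * d / b) ^ d) * gaussianN (n + 1) K := by
  obtain ⟨f, hf, hlc, hbdd, hmap⟩ :=
    exists_logConcave_density_map_eval_restrict_gaussianN k hK hKc
  have hk : Measurable fun x : Fin (n + 1) → ℝ => x k := measurable_pi_apply k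
  have hmass : ∫⁻ t, f t = gaussianN (n + 1) K := by
    rw [← setLIntegral_univ, ← withDensity_apply _ .univ, ← hmap, Measure.map_apply hk .univ,
      Set.preimage_univ, Measure.restrict_apply_univ]
  have hq_meas : Measurable fun t => |q.eval t| := by fun_prop
  have hset : MeasurableSet {t | |q.eval t| ≤ c} := measurableSet_le hq_meas measurable_const
  have hsub : volume.withDensity f {t | |q.eval t| ≤ c} =
      gaussianN (n + 1) (K ∩ {x | |q.eval (x k)| ≤ c}) := by
    rw [← hmap, Measure.map_apply hk hset, Measure.restrict_apply (hk hset), Set.inter_comm]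
    rfl
  have hbound := lintegral_abs_eval_le_of_isLogConcave hf hlc hbdd hd hq hb hc
    (by rwa [hmass, hsub])
  rwa [← hmap, lintegral_map hq_meas.ennreal_ofReal hk, hmass] at hbound

theorem setIntegral_abs_le_of_near_line {n : ℕ} {F : (Fin (n + 1) → ℝ) → ℝ} (hF : Continuous F)
    {d : ℕ} (hd : 1 ≤ d) (hline : IsPolynomialOnLines d F) {K : Set (Fin (n + 1) → ℝ)}
    (hK : IsCompact K) (hKc : Convex ℝ K) {η : ℝ} (hη : 0 < η) {k : Fin (n + 1)}
    {p w : Fin (n + 1) → ℝ} (hnear : ∀ x ∈ K, |F x - F (p + (x k - p k) • w)| < η) {b c : ℝ}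
    (hb : 0 < b) (hc : 0 ≤ c)
    (hE : b * (gaussianN (n + 1)).real K < (gaussianN (n + 1)).real (K ∩ {x | |F x| ≤ c})) :
    ∫ x in K, |F x| ∂(gaussianN (n + 1)) ≤
      ((c + η) * (2 ^ 21 * d / b) ^ d + η) * (gaussianN (n + 1)).real K := by
  obtain ⟨q, hq, hqF⟩ := hline (p - p k • w) w
  have hnear' : ∀ x ∈ K, |F x - q.eval (x k)| < η := fun x hx => by
    rw [← hqF, show p - p k • w + x k • w = p + (x k - p k) • w by module]
    exact hnear x hx
  have hsmall : K ∩ {x | |F x| ≤ c} ⊆ K ∩ {x | |q.eval (x k)| ≤ c + η} := fun x hx => by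
    have htri := abs_sub_abs_le_abs_sub (q.eval (x k)) (F x)
    rw [abs_sub_comm] at htri
    have hxc : |F x| ≤ c := hx.2
    exact ⟨hx.1, show |q.eval (x k)| ≤ c + η by linarith [hnear' x hx.1]⟩
  have hq_int : IntegrableOn (fun x => |q.eval (x k)|) K (gaussianN (n + 1)) :=
    Continuous.continuousOn (by fun_prop) |>.integrableOn_compact hK
  have hcoord : ∫ x in K, |q.eval (x k)| ∂(gaussianN (n + 1)) ≤
      (c + η) * (2 ^ 21 * d / b) ^ d * (gaussianN (n + 1)).real K := by
    rw [integral_eq_lintegral_of_nonneg_ae (ae_of_all _ fun x => abs_nonneg _)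
      hq_int.aestronglyMeasurable]
    refine ENNReal.toReal_le_of_le_ofReal (by positivity) ?_
    rw [ENNReal.ofReal_mul (by positivity), ofReal_measureReal]
    refine setLIntegral_abs_eval_coord_le k hK.measurableSet hKc hd hq hb (by positivity) ?_
    rw [← ofReal_measureReal, ← ENNReal.ofReal_mul hb.le, ENNReal.ofReal_lt_iff_lt_toReal
      (by positivity) (measure_ne_top _ _)]
    exact hE.trans_le (measureReal_mono hsmall)
  calc ∫ x in K, |F x| ∂(gaussianN (n + 1))
      ≤ ∫ x in K, (|q.eval (x k)| + η) ∂(gaussianN (n + 1)) := by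
        refine setIntegral_mono_on (hF.abs.continuousOn.integrableOn_compact hK)
          (hq_int.add (integrable_const η)) hK.measurableSet fun x hx => ?_
        linarith [abs_sub_abs_le_abs_sub (F x) (q.eval (x k)), hnear' x hx]
    _ = ∫ x in K, |q.eval (x k)| ∂(gaussianN (n + 1)) + η * (gaussianN (n + 1)).real K := by
        rw [integral_add hq_int (integrable_const η), setIntegral_const, smul_eq_mul, mul_comm]
    _ ≤ _ := by linarith

theorem exists_pos_perturbed_bound_lt {A b c a : ℝ} {d : ℕ} (hb : 0 < b)
    (h : c * (A / b) ^ d < a) :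
    ∃ η > 0, (c + η) * (A / (b / (1 + η))) ^ d + η < a := by
  have hcont : ContinuousAt (fun η : ℝ => (c + η) * (A / (b / (1 + η))) ^ d + η) 0 := by
    have hb' : ContinuousAt (fun η : ℝ => b / (1 + η)) 0 :=
      continuousAt_const.div (by fun_prop) (by norm_num)
    have hAb : ContinuousAt (fun η : ℝ => A / (b / (1 + η))) 0 :=
      continuousAt_const.div hb' (by simpa using hb.ne')
    fun_prop
  have hlt := hcont.eventually_lt (continuousAt_const (y := a)) (by simpa using h)
  obtain ⟨η, hηa, hη⟩ := ((hlt.filter_mono nhdsWithin_le_nhds).and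
    (self_mem_nhdsWithin (s := Set.Ioi (0 : ℝ)))).exists
  exact ⟨η, hη, hηa⟩

theorem setIntegral_abs_le_of_isCompact {n : ℕ} {F : (Fin (n + 1) → ℝ) → ℝ} (hF : Continuous F)
    {d : ℕ} (hd : 1 ≤ d) (hline : IsPolynomialOnLines d F) {K : Set (Fin (n + 1) → ℝ)}
    (hK : IsCompact K) (hKc : Convex ℝ K) {b c : ℝ} (hb : 0 < b) (hc : 0 ≤ c)
    (hE : b * (gaussianN (n + 1)).real K ≤ (gaussianN (n + 1)).real (K ∩ {x | |F x| ≤ c})) :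
    ∫ x in K, |F x| ∂(gaussianN (n + 1)) ≤
      c * (2 ^ 21 * d / b) ^ d * (gaussianN (n + 1)).real K := by
  set γ := gaussianN (n + 1)
  rcases (measureReal_nonneg (μ := γ) (s := K)).eq_or_lt with hK0 | hK0
  · have hγK : γ K = 0 := (measureReal_eq_zero_iff (measure_ne_top γ K)).1 hK0.symm
    rw [← hK0, mul_zero, setIntegral_measure_zero _ hγK]
  by_contra! hcon
  rw [← lt_div_iff₀ hK0] at hcon
  set a := (∫ x in K, |F x| ∂γ) / γ.real K with ha
  obtain ⟨η, hη, hηa⟩ := exists_pos_perturbed_bound_lt hb hcon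
  have hb' : b / (1 + η) < b := div_lt_self hb (by linarith)
  have hS : MeasurableSet {x | |F x| ≤ c} := measurableSet_le hF.abs.measurable measurable_const
  have hind (L : Set (Fin (n + 1) → ℝ)) :
      ∫ x in L, {x | |F x| ≤ c}.indicator 1 x ∂γ = γ.real (L ∩ {x | |F x| ≤ c}) := by
    rw [integral_indicator_one hS, measureReal_restrict_apply hS, Set.inter_comm]
  obtain ⟨L, hL, hLc, hu, hv, k, p, w, hnear⟩ := exists_convex_near_line_of_average
    (gaussianN_absolutelyContinuous (n + 1)) hK hKc (hF.abs.continuousOn.integrableOn_compact hK)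
    (v := {x | |F x| ≤ c}.indicator 1) ((integrable_const 1).indicator hS)
    (a := a) (b := b / (1 + η))
    (by rw [ha, div_mul_cancel₀ _ hK0.ne'])
    (by rw [hind]; exact (mul_lt_mul_of_pos_right hb' hK0).trans_le hE) hF hη
  rw [hind] at hv
  have hL0 : 0 < γ.real L := by
    refine measureReal_nonneg.lt_of_ne fun h0 => ?_
    rw [← h0, mul_zero] at hv
    exact (hv.trans_le (measureReal_mono Set.inter_subset_left)).ne h0
  have hbound := setIntegral_abs_le_of_near_line hF hd hline hL hLc hη hnear (by positivity) hc hv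
  exact (mul_lt_mul_of_pos_right hηa hL0).not_ge (hu.trans hbound)

theorem integral_le_of_forall_setIntegral_closedBall_le {E : Type*} [PseudoMetricSpace E]
    [MeasurableSpace E] [OpensMeasurableSpace E] {μ : Measure E} {f : E → ℝ} (hf : Integrable f μ)
    (x₀ : E) {A : ℝ} (h : ∀ᶠ R : ℕ in Filter.atTop, ∫ x in Metric.closedBall x₀ R, f x ∂μ ≤ A) :
    ∫ x, f x ∂μ ≤ A := by
  have hlim := tendsto_setIntegral_of_monotone (μ := μ) (f := f)
    (fun R : ℕ => (Metric.isClosed_closedBall (x := x₀) (ε := R)).measurableSet)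
    (fun R R' hR => Metric.closedBall_subset_closedBall (Nat.cast_le.2 hR)) hf.integrableOn
  rw [Metric.iUnion_closedBall_nat, setIntegral_univ] at hlim
  exact le_of_tendsto hlim h

theorem eventually_lt_measureReal_closedBall_inter {E : Type*} [PseudoMetricSpace E]
    [MeasurableSpace E] {μ : Measure E} [IsFiniteMeasure μ] (x₀ : E) {S : Set E} {b : ℝ}
    (h : b < μ.real S) : ∀ᶠ R : ℕ in Filter.atTop, b < μ.real (Metric.closedBall x₀ R ∩ S) := by
  have hlim := tendsto_measure_iUnion_atTop (μ := μ)
    (s := fun R : ℕ => Metric.closedBall x₀ R ∩ S) fun R R' hR =>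
      Set.inter_subset_inter_left _ (Metric.closedBall_subset_closedBall (Nat.cast_le.2 hR))
  rw [← Set.iUnion_inter, Metric.iUnion_closedBall_nat, Set.univ_inter] at hlim
  exact ((ENNReal.tendsto_toReal (measure_ne_top _ _)).comp hlim).eventually (lt_mem_nhds h)

/-- An anti-concentration inequality of **Carbery–Wright** type. -/
theorem integral_abs_le_of_le_measureReal {n : ℕ} {F : (Fin n → ℝ) → ℝ} (hF : Continuous F)
    (hFi : Integrable F (gaussianN n)) {d : ℕ} (hd : 1 ≤ d) (hline : IsPolynomialOnLines d F)
    {b c : ℝ} (hb : 0 < b) (hE : b ≤ (gaussianN n).real {x | |F x| ≤ c}) :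
    ∫ x, |F x| ∂(gaussianN n) ≤ c * (2 ^ 22 * d / b) ^ d := by
  have hd' : (1 : ℝ) ≤ d := by exact_mod_cast hd
  obtain ⟨x, hx⟩ : {x | |F x| ≤ c}.Nonempty := by
    by_contra! h
    rw [h, measureReal_empty] at hE
    linarith
  have hc : 0 ≤ c := (abs_nonneg _).trans hx
  rcases n with _ | n
  · have hb1 : b ≤ 1 := hE.trans measureReal_le_one
    rw [integral_congr_ae (ae_of_all _ fun y => congrArg (|F ·|) (Subsingleton.elim y x)),
      integral_const, probReal_univ, one_smul]
    refine hx.out.trans (le_mul_of_one_le_right hc (one_le_pow₀ ?_))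
    rw [one_le_div hb]
    linarith
  refine integral_le_of_forall_setIntegral_closedBall_le hFi.abs 0 ?_
  filter_upwards [eventually_lt_measureReal_closedBall_inter 0 ((half_lt_self hb).trans_le hE)]
    with R hR
  have hmass : (gaussianN (n + 1)).real (Metric.closedBall 0 (R : ℝ)) ≤ 1 := measureReal_le_one
  have hball := setIntegral_abs_le_of_isCompact hF hd hline (isCompact_closedBall 0 (R : ℝ))
    (convex_closedBall 0 (R : ℝ)) (half_pos hb) hc
    ((mul_le_of_le_one_right (half_pos hb).le hmass).trans hR.le)
  rw [show (2 ^ 21 * d / (b / 2) : ℝ) = 2 ^ 22 * d / b by field_simp] at hball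
  exact hball.trans (mul_le_of_le_one_right (by positivity) hmass)

end CarberyWright

section HermiteOrthonormality

theorem integrable_pow_gaussianReal (k : ℕ) :
    Integrable (fun t : ℝ => t ^ k) (gaussianReal 0 1) :=
  integrable_pow_of_mem_interior_integrableExpSet (X := fun t : ℝ => t)
    (by simp [integrableExpSet_fun_id_gaussianReal]) k

theorem integrable_eval_gaussianReal (q : Polynomial ℝ) :
    Integrable (fun t => q.eval t) (gaussianReal 0 1) := by
  simp only [Polynomial.eval_eq_sum_range]
  exact integrable_finsetSum _ fun i _ => (integrable_pow_gaussianReal i).const_mul _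

theorem integrable_gaussianPDFReal_mul_eval (q : Polynomial ℝ) :
    Integrable fun t => gaussianPDFReal 0 1 t * q.eval t := by
  have h := integrable_eval_gaussianReal q
  rw [gaussianReal_of_var_ne_zero _ one_ne_zero, integrable_withDensity_iff_integrable_smul'
    (measurable_gaussianPDF 0 1) (ae_of_all _ fun _ => gaussianPDF_lt_top)] at h
  simpa only [toReal_gaussianPDF, smul_eq_mul] using h

theorem hasDerivAt_gaussianPDFReal (t : ℝ) :
    HasDerivAt (gaussianPDFReal 0 1) (-t * gaussianPDFReal 0 1 t) t := by
  have h : HasDerivAt (fun x : ℝ => -(x - 0) ^ 2 / (2 * 1)) (-t) t := by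
    convert! (((hasDerivAt_id t).sub_const 0).pow 2).neg.div_const (2 * 1) using 1
    simp only [id_eq, sub_zero, mul_one]
    ring
  simp only [gaussianPDFReal_def, NNReal.coe_one]
  convert! h.exp.const_mul (Real.sqrt (2 * Real.pi * 1))⁻¹ using 1
  ring

theorem integral_mul_eval_gaussianReal (q : Polynomial ℝ) :
    ∫ t, t * q.eval t ∂(gaussianReal 0 1) = ∫ t, q.derivative.eval t ∂(gaussianReal 0 1) := by
  have hXq := integrable_gaussianPDFReal_mul_eval (Polynomial.X * q)
  have hq' := integrable_gaussianPDFReal_mul_eval q.derivative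
  simp only [Polynomial.eval_mul, Polynomial.eval_X] at hXq
  have hparts : ∫ t, (gaussianPDFReal 0 1 t * q.derivative.eval t -
      gaussianPDFReal 0 1 t * (t * q.eval t)) = 0 :=
    integral_eq_zero_of_hasDerivAt_of_integrable
      (fun t => by convert! (hasDerivAt_gaussianPDFReal t).mul (q.hasDerivAt t) using 1; ring)
      (hq'.sub hXq) (integrable_gaussianPDFReal_mul_eval q)
  simp only [integral_gaussianReal_eq_integral_smul one_ne_zero, smul_eq_mul]
  rw [integral_sub hq' hXq] at hparts
  exact (sub_eq_zero.1 hparts).symm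

/-- The probabilists' Hermite polynomials `H_k`, with real coefficients. -/
noncomputable def hermiteReal (k : ℕ) : Polynomial ℝ :=
  (Polynomial.hermite k).map (Int.castRingHom ℝ)

theorem hermiteFn_eq (k : ℕ) (t : ℝ) :
    hermiteFn k t = (hermiteReal k).eval t / Real.sqrt (Nat.factorial k) := rfl

theorem hermiteReal_succ (k : ℕ) :
    hermiteReal (k + 1) = Polynomial.X * hermiteReal k - (hermiteReal k).derivative := by
  simp [hermiteReal, Polynomial.hermite_succ, Polynomial.derivative_map]

theorem hermiteReal_monic (k : ℕ) : (hermiteReal k).Monic := (Polynomial.hermite_monic k).map _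

theorem natDegree_hermiteReal (k : ℕ) : (hermiteReal k).natDegree = k := by
  rw [hermiteReal, (Polynomial.hermite_monic k).natDegree_map, Polynomial.natDegree_hermite]

theorem integral_hermiteReal_succ_mul (k : ℕ) (p : Polynomial ℝ) :
    ∫ t, (hermiteReal (k + 1)).eval t * p.eval t ∂(gaussianReal 0 1) =
      ∫ t, (hermiteReal k).eval t * p.derivative.eval t ∂(gaussianReal 0 1) := by
  have hX := integrable_eval_gaussianReal (Polynomial.X * (hermiteReal k * p))
  have hl := integrable_eval_gaussianReal ((hermiteReal k).derivative * p)
  have hr := integrable_eval_gaussianReal (hermiteReal k * p.derivative)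
  have hparts := integral_mul_eval_gaussianReal (hermiteReal k * p)
  simp only [Polynomial.derivative_mul, Polynomial.eval_add, Polynomial.eval_mul,
    Polynomial.eval_X] at hX hl hr hparts
  rw [integral_add hl hr, ← sub_eq_iff_eq_add', ← integral_sub hX hl] at hparts
  rw [← hparts]
  simp only [hermiteReal_succ, Polynomial.eval_sub, Polynomial.eval_mul, Polynomial.eval_X, sub_mul,
    mul_assoc]

theorem integral_hermiteReal_mul (k : ℕ) (p : Polynomial ℝ) :
    ∫ t, (hermiteReal k).eval t * p.eval t ∂(gaussianReal 0 1) =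
      ∫ t, (Polynomial.derivative^[k] p).eval t ∂(gaussianReal 0 1) := by
  induction k generalizing p with
  | zero => simp [hermiteReal]
  | succ k ih => rw [integral_hermiteReal_succ_mul, ih, Function.iterate_succ_apply]

theorem integral_hermiteReal_mul_of_lt {j k : ℕ} (h : j < k) :
    ∫ t, (hermiteReal k).eval t * (hermiteReal j).eval t ∂(gaussianReal 0 1) = 0 := by
  rw [integral_hermiteReal_mul, Polynomial.iterate_derivative_eq_zero
    (by rwa [natDegree_hermiteReal])]
  simp

theorem iterate_derivative_hermiteReal_self (k : ℕ) :
    Polynomial.derivative^[k] (hermiteReal k) = Polynomial.C (Nat.factorial k : ℝ) := by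
  have hlead : (hermiteReal k).coeff k = 1 := by
    simpa only [natDegree_hermiteReal] using (hermiteReal_monic k).coeff_natDegree
  ext m
  rw [Polynomial.coeff_iterate_derivative, Polynomial.coeff_C]
  split_ifs with hm
  · simp [hm, hlead, Nat.descFactorial_self]
  · rw [Polynomial.coeff_eq_zero_of_natDegree_lt (by rw [natDegree_hermiteReal]; omega), smul_zero]

theorem integral_hermiteReal_sq (k : ℕ) :
    ∫ t, (hermiteReal k).eval t * (hermiteReal k).eval t ∂(gaussianReal 0 1) =
      Nat.factorial k := by
  simp [integral_hermiteReal_mul, iterate_derivative_hermiteReal_self]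

theorem integral_hermiteFn_mul (j k : ℕ) :
    ∫ t, hermiteFn j t * hermiteFn k t ∂(gaussianReal 0 1) = if j = k then 1 else 0 := by
  simp only [hermiteFn_eq, div_mul_div_comm]
  rw [integral_div]
  split_ifs with h
  · rw [h, integral_hermiteReal_sq, Real.mul_self_sqrt (by positivity), div_self (by positivity)]
  · rcases lt_or_gt_of_ne h with h | h
    · simp only [mul_comm ((hermiteReal j).eval _)]
      rw [integral_hermiteReal_mul_of_lt h, zero_div]
    · rw [integral_hermiteReal_mul_of_lt h, zero_div]

theorem integral_hermiteMv_mul {n : ℕ} (α β : Fin n → ℕ) :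
    ∫ x, hermiteMv α x * hermiteMv β x ∂(gaussianN n) = if α = β then 1 else 0 := by
  simp only [hermiteMv, ← Finset.prod_mul_distrib, gaussianN]
  rw [integral_fintype_prod_eq_prod (fun i t => hermiteFn (α i) t * hermiteFn (β i) t)]
  simp only [integral_hermiteFn_mul, Finset.prod_ite_zero]
  simp [funext_iff]

theorem exists_eval_eq_sum_hermiteFn {q : Polynomial ℝ} {D : ℕ} (hq : q.natDegree ≤ D) :
    ∃ e : ℕ → ℝ, ∀ t : ℝ, q.eval t = ∑ i ∈ Finset.range (D + 1), e i * hermiteFn i t := by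
  let S : Polynomial.Sequence ℝ :=
    ⟨hermiteReal, fun k => by
      rw [Polynomial.degree_eq_natDegree (hermiteReal_monic k).ne_zero, natDegree_hermiteReal]⟩
  have hunit : ∀ i < D + 1, IsUnit (S i).leadingCoeff := fun i _ =>
    (hermiteReal_monic i).leadingCoeff ▸ isUnit_one
  have hmem : q ∈ Submodule.span ℝ (hermiteReal '' (Finset.range (D + 1) : Set ℕ)) := by
    rw [Finset.coe_range]
    refine (S.span_degreeLT hunit).ge (Polynomial.mem_degreeLT.2 ?_)
    exact Polynomial.degree_le_natDegree.trans_lt (by exact_mod_cast Nat.lt_succ_of_le hq)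
  obtain ⟨e, he⟩ := (Submodule.mem_span_image_finset_iff_exists_fun' ℝ).1 hmem
  refine ⟨fun i => e i * Real.sqrt (Nat.factorial i), fun t => ?_⟩
  rw [← he, Polynomial.eval_finsetSum]
  refine Finset.sum_congr rfl fun i _ => ?_
  have hi : Real.sqrt (Nat.factorial i) ≠ 0 := by positivity
  rw [Polynomial.eval_smul, smul_eq_mul, hermiteFn_eq]
  field_simp

end HermiteOrthonormality

section PolynomialFunctions

theorem sum_apply_le_totalDegree {n : ℕ} {P : MvPolynomial (Fin n) ℝ} {m : Fin n →₀ ℕ}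
    (hm : m ∈ P.support) : ∑ i, m i ≤ P.totalDegree :=
  (Finsupp.sum_fintype m (fun _ e => e) fun _ => rfl).symm.trans_le (le_totalDegree hm)

/-- `F` is the function given by some polynomial of total degree at most `D`. Working with functions
rather than with `MvPolynomial`s makes closure under Gaussian averages directly available. -/
def IsPolyOfDegreeLE {n : ℕ} (D : ℕ) (F : (Fin n → ℝ) → ℝ) : Prop :=
  ∃ P : MvPolynomial (Fin n) ℝ, P.totalDegree ≤ D ∧ ∀ x, F x = eval x P

namespace IsPolyOfDegreeLE

variable {n D E : ℕ} {F G : (Fin n → ℝ) → ℝ}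

theorem const (D : ℕ) (c : ℝ) : IsPolyOfDegreeLE D fun _ : Fin n → ℝ => c :=
  ⟨C c, by simp, by simp⟩

theorem coord (i : Fin n) : IsPolyOfDegreeLE 1 fun x : Fin n → ℝ => x i :=
  ⟨X i, by simp, by simp⟩

theorem mono (hF : IsPolyOfDegreeLE D F) (h : D ≤ E) : IsPolyOfDegreeLE E F := by
  obtain ⟨P, hP, hFP⟩ := hF
  exact ⟨P, hP.trans h, hFP⟩

theorem add (hF : IsPolyOfDegreeLE D F) (hG : IsPolyOfDegreeLE D G) :
    IsPolyOfDegreeLE D fun x => F x + G x := by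
  obtain ⟨P, hP, hFP⟩ := hF
  obtain ⟨Q, hQ, hGQ⟩ := hG
  exact ⟨P + Q, (totalDegree_add P Q).trans (max_le hP hQ), fun x => by simp [hFP, hGQ]⟩

theorem mul (hF : IsPolyOfDegreeLE D F) (hG : IsPolyOfDegreeLE E G) :
    IsPolyOfDegreeLE (D + E) fun x => F x * G x := by
  obtain ⟨P, hP, hFP⟩ := hF
  obtain ⟨Q, hQ, hGQ⟩ := hG
  exact ⟨P * Q, (totalDegree_mul P Q).trans (add_le_add hP hQ), fun x => by simp [hFP, hGQ]⟩

theorem const_mul (c : ℝ) (hF : IsPolyOfDegreeLE D F) : IsPolyOfDegreeLE D fun x => c * F x := by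
  simpa using (const 0 c).mul hF

theorem pow (hF : IsPolyOfDegreeLE D F) (k : ℕ) : IsPolyOfDegreeLE (k * D) fun x => F x ^ k := by
  induction k with
  | zero => simpa using const (n := n) 0 1
  | succ k ih => simpa [pow_succ, add_mul] using ih.mul hF

theorem sum {ι : Type*} (s : Finset ι) {f : ι → (Fin n → ℝ) → ℝ}
    (h : ∀ i ∈ s, IsPolyOfDegreeLE D (f i)) : IsPolyOfDegreeLE D fun x => ∑ i ∈ s, f i x := by
  classical
  induction s using Finset.induction_on with
  | empty => simpa using const (n := n) D 0
  | insert i s hi ih =>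
    simp only [Finset.sum_insert hi]
    exact (h i (by simp)).add (ih fun j hj => h j (by simp [hj]))

theorem prod {ι : Type*} (s : Finset ι) {f : ι → (Fin n → ℝ) → ℝ} {δ : ι → ℕ}
    (h : ∀ i ∈ s, IsPolyOfDegreeLE (δ i) (f i)) :
    IsPolyOfDegreeLE (∑ i ∈ s, δ i) fun x => ∏ i ∈ s, f i x := by
  classical
  induction s using Finset.induction_on with
  | empty => simpa using const (n := n) 0 1
  | insert i s hi ih =>
    simp only [Finset.prod_insert hi, Finset.sum_insert hi]
    exact (h i (by simp)).mul (ih fun j hj => h j (by simp [hj]))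

theorem comp_affine (hF : IsPolyOfDegreeLE D F) (a : Fin n → ℝ) (b : ℝ) :
    IsPolyOfDegreeLE D fun y => F (a + b • y) := by
  obtain ⟨P, hP, hFP⟩ := hF
  simp only [hFP, eval_eq', Pi.add_apply, Pi.smul_apply, smul_eq_mul]
  refine sum _ fun m hm => const_mul _ ?_
  refine (prod (δ := fun i => m i) _ fun i _ => ?_).mono ((sum_apply_le_totalDegree hm).trans hP)
  simpa only [mul_one] using ((const 1 (a i)).add ((coord i).const_mul b)).pow (m i)

theorem continuous (hF : IsPolyOfDegreeLE D F) : Continuous F := by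
  obtain ⟨P, -, hFP⟩ := hF
  exact (MvPolynomial.continuous_eval P).congr fun x => (hFP x).symm

theorem integrable (hF : IsPolyOfDegreeLE D F) : Integrable F (gaussianN n) := by
  obtain ⟨P, -, hFP⟩ := hF
  simp only [funext hFP, eval_eq', gaussianN]
  exact integrable_finsetSum _ fun m _ => (Integrable.fintype_prod
    (f := fun i t => t ^ m i) fun i => integrable_pow_gaussianReal (m i)).const_mul _

theorem isPolynomialOnLines (hF : IsPolyOfDegreeLE D F) : IsPolynomialOnLines D F := by
  intro a b
  obtain ⟨P, hP, hFP⟩ := hF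
  refine ⟨∑ m ∈ P.support, Polynomial.C (P.coeff m) *
    ∏ i, (Polynomial.C (b i) * Polynomial.X + Polynomial.C (a i)) ^ m i, ?_, fun s => ?_⟩
  · refine Polynomial.natDegree_sum_le_of_forall_le _ _ fun m hm => ?_
    have hpow (i : Fin n) :
        ((Polynomial.C (b i) * Polynomial.X + Polynomial.C (a i)) ^ m i).natDegree ≤ m i :=
      Polynomial.natDegree_pow_le.trans
        (mul_le_of_le_one_right (Nat.zero_le _) Polynomial.natDegree_linear_le)
    exact (Polynomial.natDegree_C_mul_le _ _).trans <| (Polynomial.natDegree_prod_le _ _).trans <|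
      (Finset.sum_le_sum fun i _ => hpow i).trans <| (sum_apply_le_totalDegree hm).trans hP
  · simp [hFP, eval_eq', Polynomial.eval_finsetSum, Polynomial.eval_prod, add_comm, mul_comm s]

end IsPolyOfDegreeLE

theorem isPolyOfDegreeLE_hermiteMv {n : ℕ} (α : Fin n → ℕ) :
    IsPolyOfDegreeLE (∑ i, α i) (hermiteMv α) := by
  refine IsPolyOfDegreeLE.prod Finset.univ (f := fun i (x : Fin n → ℝ) => hermiteFn (α i) (x i))
    fun i _ => ?_
  simp only [hermiteFn_eq, Polynomial.eval_eq_sum_range, div_eq_inv_mul, Finset.mul_sum]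
  refine .sum _ fun j hj => .const_mul _ (.const_mul _ (((IsPolyOfDegreeLE.coord i).pow j).mono ?_))
  rw [natDegree_hermiteReal, Finset.mem_range] at hj
  omega

theorem integrable_hermiteMv_mul {n : ℕ} (α β : Fin n → ℕ) :
    Integrable (fun x => hermiteMv α x * hermiteMv β x) (gaussianN n) :=
  ((isPolyOfDegreeLE_hermiteMv α).mul (isPolyOfDegreeLE_hermiteMv β)).integrable

end PolynomialFunctions

section GaussianSmoothing

variable {n D : ℕ} {F : (Fin n → ℝ) → ℝ} {a b : ℝ}

theorem measurePreserving_add_gaussianReal (h : a ^ 2 + b ^ 2 = 1) :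
    MeasurePreserving (fun p : ℝ × ℝ => a * p.1 + b * p.2)
      ((gaussianReal 0 1).prod (gaussianReal 0 1)) (gaussianReal 0 1) := by
  refine ⟨by fun_prop, ?_⟩
  have hcomp : (fun p : ℝ × ℝ => a * p.1 + b * p.2) =
      (fun p : ℝ × ℝ => p.1 + p.2) ∘ Prod.map (fun t => a * t) fun t => b * t := rfl
  rw [hcomp, ← Measure.map_map (by fun_prop) (by fun_prop),
    ← Measure.map_prod_map _ _ (by fun_prop) (by fun_prop), gaussianReal_map_const_mul,
    gaussianReal_map_const_mul]
  refine gaussianReal_conv_gaussianReal.trans ?_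
  congr 1
  · simp
  · ext
    simpa using h

theorem measurePreserving_add_gaussianN (n : ℕ) (h : a ^ 2 + b ^ 2 = 1) :
    MeasurePreserving (fun p : (Fin n → ℝ) × (Fin n → ℝ) => a • p.1 + b • p.2)
      ((gaussianN n).prod (gaussianN n)) (gaussianN n) :=
  (measurePreserving_pi (fun _ : Fin n => (gaussianReal 0 1).prod (gaussianReal 0 1))
    (fun _ => gaussianReal 0 1) fun _ => measurePreserving_add_gaussianReal h).comp
    (measurePreserving_arrowProdEquivProdArrow ℝ ℝ (Fin n)
      (fun _ => gaussianReal 0 1) fun _ => gaussianReal 0 1).symm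

theorem integral_add_mul_pow_gaussianReal (c b : ℝ) (k : ℕ) :
    ∫ t, (c + b * t) ^ k ∂(gaussianReal 0 1) = ∑ j ∈ Finset.range (k + 1),
      (b ^ (k - j) * k.choose j * ∫ t, t ^ (k - j) ∂(gaussianReal 0 1)) * c ^ j := by
  simp only [add_pow, mul_pow]
  rw [integral_finsetSum _ fun j _ =>
    (((integrable_pow_gaussianReal (k - j)).const_mul _).const_mul _).mul_const _]
  refine Finset.sum_congr rfl fun j _ => ?_
  rw [integral_mul_const, integral_const_mul, integral_const_mul]
  ring

theorem isPolyOfDegreeLE_integral_prod_pow (a b : ℝ) (m : Fin n → ℕ) :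
    IsPolyOfDegreeLE (∑ i, m i)
      fun x => ∫ y, ∏ i, (a * x i + b * y i) ^ m i ∂(gaussianN n) := by
  have hprod (x : Fin n → ℝ) : ∫ y, ∏ i, (a * x i + b * y i) ^ m i ∂(gaussianN n) =
      ∏ i, ∫ t, (a * x i + b * t) ^ m i ∂(gaussianReal 0 1) :=
    integral_fintype_prod_eq_prod fun i t => (a * x i + b * t) ^ m i
  simp only [hprod, integral_add_mul_pow_gaussianReal, mul_pow]
  refine .prod _ fun i _ => .sum _ fun j hj => .const_mul _ (.const_mul _ ?_)
  refine ((IsPolyOfDegreeLE.coord i).pow j).mono ?_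
  rw [mul_one]
  exact Nat.le_of_lt_succ (Finset.mem_range.1 hj)

theorem IsPolyOfDegreeLE.smoothing (hF : IsPolyOfDegreeLE D F) (a b : ℝ) :
    IsPolyOfDegreeLE D fun x => ∫ y, F (a • x + b • y) ∂(gaussianN n) := by
  obtain ⟨P, hP, hFP⟩ := hF
  have hmono (m : Fin n →₀ ℕ) (x : Fin n → ℝ) :
      Integrable (fun y => ∏ i, (a * x i + b * y i) ^ m i) (gaussianN n) :=
    (comp_affine ⟨∏ i, X i ^ m i, le_rfl, fun z => rfl⟩ (a • x) b).integrable.congr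
      (ae_of_all _ fun y => by simp)
  simp only [hFP, eval_eq', Pi.add_apply, Pi.smul_apply, smul_eq_mul]
  simp only [integral_finsetSum _ fun m _ => (hmono m _).const_mul _, integral_const_mul]
  exact sum _ fun m hm => const_mul _ <|
    (isPolyOfDegreeLE_integral_prod_pow a b m).mono ((sum_apply_le_totalDegree hm).trans hP)

theorem IsPolyOfDegreeLE.integral_smoothing (hF : IsPolyOfDegreeLE D F) (h : a ^ 2 + b ^ 2 = 1) :
    ∫ x, ∫ y, F (a • x + b • y) ∂(gaussianN n) ∂(gaussianN n) = ∫ x, F x ∂(gaussianN n) := by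
  have hmp := measurePreserving_add_gaussianN n h
  have hi : Integrable (fun p : (Fin n → ℝ) × (Fin n → ℝ) => F (a • p.1 + b • p.2))
      ((gaussianN n).prod (gaussianN n)) :=
    hmp.integrable_comp_of_integrable hF.integrable
  rw [← integral_prod _ hi, ← integral_map (f := F) hmp.measurable.aemeasurable
    hF.continuous.aestronglyMeasurable, hmp.map_eq]

end GaussianSmoothing

section HermiteExpansion

/-- The multi-indices all of whose entries are at most `d`: an index set that serves every
polynomial of total degree at most `d`, so that expansions of a whole family can be compared. -/
def boxIndices (n d : ℕ) : Finset (Fin n → ℕ) := Fintype.piFinset fun _ => Finset.range (d + 1)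

variable {n d : ℕ} {p : MvPolynomial (Fin n) ℝ}

theorem mem_boxIndices {α : Fin n → ℕ} : α ∈ boxIndices n d ↔ ∀ i, α i ≤ d := by
  simp [boxIndices]

theorem eval_eq_sum_boxIndices (hp : p.totalDegree ≤ d) (z : Fin n → ℝ) :
    eval z p = ∑ a ∈ boxIndices n d,
      coeff (Finsupp.equivFunOnFinite.symm a) p * ∏ i, z i ^ a i := by
  rw [eval_eq']
  refine Finset.sum_of_injOn (fun m => (m : Fin n → ℕ)) DFunLike.coe_injective.injOn ?_ ?_ ?_
  · exact fun m hm => mem_boxIndices.2 fun i =>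
      (Finset.single_le_sum (f := m) (fun _ _ => Nat.zero_le _) (Finset.mem_univ i)).trans
        ((sum_apply_le_totalDegree hm).trans hp)
  · intro a _ ha
    rw [notMem_support_iff.1 fun h => ha ⟨_, h, by simp⟩, zero_mul]
  · simp

theorem exists_prod_pow_eq_sum_hermiteMv {a : Fin n → ℕ} (ha : a ∈ boxIndices n d) :
    ∃ e : (Fin n → ℕ) → ℝ, ∀ z : Fin n → ℝ,
      ∏ i, z i ^ a i = ∑ α ∈ boxIndices n d, e α * hermiteMv α z := by
  have hpow (i : Fin n) : ∃ e : ℕ → ℝ, ∀ t : ℝ,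
      t ^ a i = ∑ j ∈ Finset.range (d + 1), e j * hermiteFn j t := by
    simpa using exists_eval_eq_sum_hermiteFn
      ((Polynomial.natDegree_X_pow_le (R := ℝ) (a i)).trans (mem_boxIndices.1 ha i))
  choose e he using hpow
  refine ⟨fun α => ∏ i, e i (α i), fun z => ?_⟩
  simp only [he, Finset.prod_univ_sum, Finset.prod_mul_distrib, hermiteMv, boxIndices]

theorem exists_eval_eq_sum_hermiteMv (hp : p.totalDegree ≤ d) :
    ∃ c : (Fin n → ℕ) → ℝ, ∀ z, eval z p = ∑ α ∈ boxIndices n d, c α * hermiteMv α z := by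
  choose! e he using fun a => exists_prod_pow_eq_sum_hermiteMv (n := n) (d := d) (a := a)
  refine ⟨fun α => ∑ a ∈ boxIndices n d, coeff (Finsupp.equivFunOnFinite.symm a) p * e a α,
    fun z => ?_⟩
  simp only [eval_eq_sum_boxIndices hp z, Finset.sum_mul]
  rw [Finset.sum_comm]
  refine Finset.sum_congr rfl fun a ha => ?_
  simp only [he a ha, Finset.mul_sum, mul_assoc]

theorem hermiteCoeff_eq_of_eval_eq_sum {Λ : Finset (Fin n → ℕ)} {c : (Fin n → ℕ) → ℝ}
    (h : ∀ z, eval z p = ∑ α ∈ Λ, c α * hermiteMv α z) (β : Fin n → ℕ) :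
    hermiteCoeff p β = if β ∈ Λ then c β else 0 := by
  simp only [hermiteCoeff, hermiteCoeffF, h, Finset.sum_mul, mul_assoc]
  rw [integral_finsetSum _ fun α _ => (integrable_hermiteMv_mul α β).const_mul _]
  simp only [integral_const_mul, integral_hermiteMv_mul, mul_ite, mul_one, mul_zero]
  rw [Finset.sum_ite_eq' Λ β]

theorem hermiteCoeff_eq_zero_of_notMem_boxIndices (hp : p.totalDegree ≤ d) {α : Fin n → ℕ}
    (hα : α ∉ boxIndices n d) : hermiteCoeff p α = 0 := by
  obtain ⟨c, hc⟩ := exists_eval_eq_sum_hermiteMv hp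
  rw [hermiteCoeff_eq_of_eval_eq_sum hc, if_neg hα]

theorem eval_eq_sum_hermiteCoeff (hp : p.totalDegree ≤ d) (z : Fin n → ℝ) :
    eval z p = ∑ α ∈ boxIndices n d, hermiteCoeff p α * hermiteMv α z := by
  obtain ⟨c, hc⟩ := exists_eval_eq_sum_hermiteMv hp
  rw [hc z]
  refine Finset.sum_congr rfl fun α hα => ?_
  rw [hermiteCoeff_eq_of_eval_eq_sum hc, if_pos hα]

theorem hyperVarGE_eq_sum_boxIndices (hp : p.totalDegree ≤ d) (R : ℝ) (m : ℕ) :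
    hyperVarGE R m p = ∑ α ∈ boxIndices n d with m ≤ ∑ i, α i,
      R ^ (2 * ∑ i, α i) * hermiteCoeff p α ^ 2 := by
  rw [Finset.sum_filter]
  exact tsum_eq_sum fun α hα => by simp [hermiteCoeff_eq_zero_of_notMem_boxIndices hp hα]

theorem hermiteCoeff_eq_sum_coeff_mul (hp : p.totalDegree ≤ d) (α : Fin n → ℕ) :
    hermiteCoeff p α = ∑ a ∈ boxIndices n d, coeff (Finsupp.equivFunOnFinite.symm a) p *
      ∫ x, (∏ i, x i ^ a i) * hermiteMv α x ∂(gaussianN n) := by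
  have hi (a : Fin n → ℕ) :
      Integrable (fun x => (∏ i, x i ^ a i) * hermiteMv α x) (gaussianN n) :=
    ((IsPolyOfDegreeLE.prod Finset.univ fun i _ => (IsPolyOfDegreeLE.coord i).pow (a i)).mul
      (isPolyOfDegreeLE_hermiteMv α)).integrable
  simp only [hermiteCoeff, hermiteCoeffF, eval_eq_sum_boxIndices hp, Finset.sum_mul, mul_assoc]
  rw [integral_finsetSum _ fun a _ => (hi a).const_mul _]
  simp only [integral_const_mul]

theorem NiceFamily.isPolyOfDegreeLE_hermiteCoeff {I : ℕ}
    {g : (Fin I → ℝ) → MvPolynomial (Fin n) ℝ} (hg : NiceFamily n I d g) (α : Fin n → ℕ) :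
    IsPolyOfDegreeLE d fun υ => hermiteCoeff (g υ) α := by
  simp only [fun υ => hermiteCoeff_eq_sum_coeff_mul (hg.1 υ) α, mul_comm (coeff _ _)]
  exact .sum _ fun a _ => .const_mul _ (hg.2 _)

theorem eval_zoom (g : MvPolynomial (Fin n) ℝ) (lam : ℝ) (x y : Fin n → ℝ) :
    eval y (zoom g lam x) = eval (Real.sqrt (1 - lam) • x + Real.sqrt lam • y) g := by
  rw [zoom, map_aeval, eval_eq', coe_eval₂Hom, eval₂_eq']
  simp

end HermiteExpansion

section AverageSquare

variable {n I D : ℕ} {c : (Fin n → ℕ) → (Fin I → ℝ) → ℝ}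

/-- The average over `υ` of the square of `∑ α ∈ Λ, c α υ • h_α`, as a function of the point `z`.
Its average over `z` is the averaged squared 2-norm of the family. -/
noncomputable def averageSq (c : (Fin n → ℕ) → (Fin I → ℝ) → ℝ) (Λ : Finset (Fin n → ℕ))
    (z : Fin n → ℝ) : ℝ :=
  ∫ υ, (∑ α ∈ Λ, c α υ * hermiteMv α z) ^ 2 ∂(gaussianN I)

theorem averageSq_nonneg (c : (Fin n → ℕ) → (Fin I → ℝ) → ℝ) (Λ : Finset (Fin n → ℕ))
    (z : Fin n → ℝ) : 0 ≤ averageSq c Λ z :=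
  integral_nonneg fun _ => sq_nonneg _

theorem sum_mul_hermiteMv_sq (Λ : Finset (Fin n → ℕ)) (υ : Fin I → ℝ) (z : Fin n → ℝ) :
    (∑ α ∈ Λ, c α υ * hermiteMv α z) ^ 2 =
      ∑ α ∈ Λ, ∑ β ∈ Λ, c α υ * c β υ * (hermiteMv α z * hermiteMv β z) := by
  simp only [sq, Finset.sum_mul_sum, mul_mul_mul_comm]

theorem averageSq_eq (hc : ∀ α, IsPolyOfDegreeLE D (c α)) (Λ : Finset (Fin n → ℕ))
    (z : Fin n → ℝ) :
    averageSq c Λ z = ∑ α ∈ Λ, ∑ β ∈ Λ, (∫ υ, c α υ * c β υ ∂(gaussianN I)) *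
      (hermiteMv α z * hermiteMv β z) := by
  have hi (α β : Fin n → ℕ) : Integrable (fun υ => c α υ * c β υ *
      (hermiteMv α z * hermiteMv β z)) (gaussianN I) :=
    ((hc α).mul (hc β)).integrable.mul_const _
  simp only [averageSq, sum_mul_hermiteMv_sq]
  simp only [integral_finsetSum _ fun α _ => integrable_finsetSum Λ fun β _ => hi α β,
    integral_finsetSum Λ fun β _ => hi _ β, integral_mul_const]

theorem isPolyOfDegreeLE_averageSq (hc : ∀ α, IsPolyOfDegreeLE D (c α)) {Λ : Finset (Fin n → ℕ)}
    {k : ℕ} (hΛ : ∀ α ∈ Λ, ∑ i, α i ≤ k) : IsPolyOfDegreeLE (2 * k) (averageSq c Λ) := by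
  rw [funext (averageSq_eq hc Λ), two_mul]
  exact .sum _ fun α hα => .sum _ fun β hβ => .const_mul _ <|
    ((isPolyOfDegreeLE_hermiteMv α).mono (hΛ α hα)).mul
      ((isPolyOfDegreeLE_hermiteMv β).mono (hΛ β hβ))

theorem exists_isPolyOfDegreeLE_averageSq (hc : ∀ α, IsPolyOfDegreeLE D (c α))
    (Λ : Finset (Fin n → ℕ)) : ∃ k, IsPolyOfDegreeLE k (averageSq c Λ) :=
  ⟨_, isPolyOfDegreeLE_averageSq hc fun _ hα =>
    Finset.le_sup (f := fun α : Fin n → ℕ => ∑ i, α i) hα⟩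

theorem integral_averageSq (hc : ∀ α, IsPolyOfDegreeLE D (c α)) (Λ : Finset (Fin n → ℕ)) :
    ∫ z, averageSq c Λ z ∂(gaussianN n) = ∑ α ∈ Λ, ∫ υ, c α υ ^ 2 ∂(gaussianN I) := by
  have hi (α β : Fin n → ℕ) : Integrable (fun z => (∫ υ, c α υ * c β υ ∂(gaussianN I)) *
      (hermiteMv α z * hermiteMv β z)) (gaussianN n) :=
    (integrable_hermiteMv_mul α β).const_mul _
  simp only [averageSq_eq hc]
  rw [integral_finsetSum _ fun α _ => integrable_finsetSum _ fun β _ => hi α β]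
  refine Finset.sum_congr rfl fun α hα => ?_
  rw [integral_finsetSum _ fun β _ => hi α β]
  simp only [integral_const_mul, integral_hermiteMv_mul, mul_ite, mul_one, mul_zero]
  rw [Finset.sum_ite_eq Λ α, if_pos hα]
  simp only [sq]

theorem integral_integral_sq_comp_affine (hc : ∀ α, IsPolyOfDegreeLE D (c α))
    (Λ : Finset (Fin n → ℕ)) (x : Fin n → ℝ) (b : ℝ) :
    ∫ υ, ∫ y, (∑ α ∈ Λ, c α υ * hermiteMv α (x + b • y)) ^ 2 ∂(gaussianN n) ∂(gaussianN I) =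
      ∫ y, averageSq c Λ (x + b • y) ∂(gaussianN n) := by
  refine integral_integral_swap ?_
  simp only [Function.uncurry_def, sum_mul_hermiteMv_sq]
  exact integrable_finsetSum _ fun α _ => integrable_finsetSum _ fun β _ =>
    ((hc α).mul (hc β)).integrable.mul_prod
      (((isPolyOfDegreeLE_hermiteMv α).mul
        (isPolyOfDegreeLE_hermiteMv β)).comp_affine x b).integrable

theorem averageSq_filter_not_le (hc : ∀ α, IsPolyOfDegreeLE D (c α)) (Λ : Finset (Fin n → ℕ))
    (P : (Fin n → ℕ) → Prop) [DecidablePred P] (z : Fin n → ℝ) :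
    averageSq c {α ∈ Λ | ¬ P α} z ≤
      2 * averageSq c Λ z + 2 * averageSq c {α ∈ Λ | P α} z := by
  have hi (Λ : Finset (Fin n → ℕ)) :
      Integrable (fun υ => (∑ α ∈ Λ, c α υ * hermiteMv α z) ^ 2) (gaussianN I) :=
    (IsPolyOfDegreeLE.pow (.sum _ fun α _ => (hc α).mul (.const 0 _)) 2).integrable
  simp only [averageSq]
  rw [← integral_const_mul, ← integral_const_mul,
    ← integral_add ((hi _).const_mul _) ((hi _).const_mul _)]
  refine integral_mono (hi _) (((hi _).const_mul _).add ((hi _).const_mul _)) fun υ => ?_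
  have hsplit := Finset.sum_filter_add_sum_filter_not Λ P fun α => c α υ * hermiteMv α z
  simp only [← hsplit]
  nlinarith [sq_nonneg ((∑ α ∈ Λ with P α, c α υ * hermiteMv α z) * 2 +
    ∑ α ∈ Λ with ¬ P α, c α υ * hermiteMv α z)]

theorem smoothing_averageSq_filter_not_le (hc : ∀ α, IsPolyOfDegreeLE D (c α))
    (Λ : Finset (Fin n → ℕ)) (P : (Fin n → ℕ) → Prop) [DecidablePred P] (x : Fin n → ℝ) (b : ℝ) :
    ∫ y, averageSq c {α ∈ Λ | ¬ P α} (x + b • y) ∂(gaussianN n) ≤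
      2 * ∫ y, averageSq c Λ (x + b • y) ∂(gaussianN n) +
        2 * ∫ y, averageSq c {α ∈ Λ | P α} (x + b • y) ∂(gaussianN n) := by
  have hi (Λ : Finset (Fin n → ℕ)) :
      Integrable (fun y => averageSq c Λ (x + b • y)) (gaussianN n) :=
    ((exists_isPolyOfDegreeLE_averageSq hc Λ).choose_spec.comp_affine x b).integrable
  rw [← integral_const_mul, ← integral_const_mul,
    ← integral_add ((hi _).const_mul _) ((hi _).const_mul _)]
  exact integral_mono (hi _) (((hi _).const_mul _).add ((hi _).const_mul _))
    fun y => averageSq_filter_not_le hc Λ P (x + b • y)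

end AverageSquare

section Retention

variable {n k : ℕ}

theorem IsPolyOfDegreeLE.measureReal_setOf_le_lt {U : (Fin n → ℝ) → ℝ} (hk : 1 ≤ k)
    (hU : IsPolyOfDegreeLE (2 * k) U) (hU0 : ∀ x, 0 ≤ U x) {N β : ℝ} (hN : 0 < N) (hβ : 0 < β)
    (hUi : N / 2 ≤ ∫ x, U x ∂(gaussianN n)) :
    (gaussianN n).real {x | U x ≤ 4 * (β / (2 ^ 27 * k)) ^ (2 * k) * N} < β / 2 := by
  have hk0 : (0 : ℝ) < k := by exact_mod_cast hk
  by_contra! hE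
  have hmean := integral_abs_le_of_le_measureReal hU.continuous hU.integrable (by omega)
    hU.isPolynomialOnLines (half_pos hβ) (by simpa only [abs_of_nonneg (hU0 _)] using hE)
  simp only [abs_of_nonneg (hU0 _)] at hmean
  have hbase : β / (2 ^ 27 * k) * (2 ^ 22 * ((2 * k : ℕ) : ℝ) / (β / 2)) = 1 / 8 := by
    push_cast
    field_simp
    norm_num
  have hconst : 4 * (β / (2 ^ 27 * k)) ^ (2 * k) * N *
      (2 ^ 22 * ((2 * k : ℕ) : ℝ) / (β / 2)) ^ (2 * k) = 4 * N * (1 / 8) ^ (2 * k) := by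
    rw [← hbase, mul_pow (β / _)]
    ring
  have hpow : ((1 : ℝ) / 8) ^ (2 * k) ≤ (1 / 8) ^ 2 :=
    pow_le_pow_of_le_one (by norm_num) (by norm_num) (by omega)
  rw [hconst] at hmean
  nlinarith

theorem gaussianN_setOf_not_le_of_half_sub_le {U V W : (Fin n → ℝ) → ℝ}
    (hW : ∀ x, U x / 2 - V x ≤ W x) (hV : Integrable V (gaussianN n)) (hV0 : ∀ x, 0 ≤ V x)
    {t β : ℝ} (ht : 0 < t) (hU : (gaussianN n).real {x | U x ≤ 4 * t} ≤ β / 2)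
    (hVi : ∫ x, V x ∂(gaussianN n) ≤ t * (β / 2)) :
    gaussianN n {x | ¬ t ≤ W x} ≤ ENNReal.ofReal β := by
  have hVt : (gaussianN n).real {x | t ≤ V x} ≤ β / 2 :=
    le_of_mul_le_mul_left
      ((mul_meas_ge_le_integral_of_nonneg (ae_of_all _ hV0) hV t).trans hVi) ht
  have hsub : {x | ¬ t ≤ W x} ⊆ {x | U x ≤ 4 * t} ∪ {x | t ≤ V x} := by
    intro x hx
    by_contra hx'
    simp only [Set.mem_union, Set.mem_ofPred_eq, not_or, not_le] at hx hx'
    linarith [hW x]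
  rw [← ofReal_measureReal]
  refine ENNReal.ofReal_le_ofReal ((measureReal_mono hsub).trans ?_)
  linarith [measureReal_union_le (μ := gaussianN n) {x | U x ≤ 4 * t} {x | t ≤ V x}]

theorem sum_filter_le_pow_mul_of_sum_pow_mul_le {ι : Type*} {s : Finset ι} {deg : ι → ℕ}
    {G : ι → ℝ} (hG : ∀ i, 0 ≤ G i) {r S N : ℝ} (hr : 0 ≤ r) (hS : 1 ≤ S) (hrS : 1 ≤ r * S)
    (h : ∑ i ∈ s with k ≤ deg i, S ^ (2 * deg i) * G i ≤ N) :
    ∑ i ∈ s with k ≤ deg i, G i ≤ r ^ (2 * k) * N := by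
  have hterm : ∀ i ∈ s.filter (k ≤ deg ·), G i ≤ r ^ (2 * k) * (S ^ (2 * deg i) * G i) := by
    intro i hi
    have hik : 2 * k ≤ 2 * deg i := Nat.mul_le_mul_left 2 (Finset.mem_filter.1 hi).2
    calc G i ≤ (r * S) ^ (2 * k) * G i := le_mul_of_one_le_left (hG i) (one_le_pow₀ hrS)
      _ = r ^ (2 * k) * (S ^ (2 * k) * G i) := by rw [mul_pow, mul_assoc]
      _ ≤ r ^ (2 * k) * (S ^ (2 * deg i) * G i) := by
          gcongr
          exact hG i
  calc ∑ i ∈ s with k ≤ deg i, G i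
      ≤ ∑ i ∈ s with k ≤ deg i, r ^ (2 * k) * (S ^ (2 * deg i) * G i) := Finset.sum_le_sum hterm
    _ = r ^ (2 * k) * ∑ i ∈ s with k ≤ deg i, S ^ (2 * deg i) * G i := (Finset.mul_sum ..).symm
    _ ≤ r ^ (2 * k) * N := by gcongr

theorem sum_filter_le_of_attenuated {ι : Type*} {s : Finset ι} {deg : ι → ℕ} {G : ι → ℝ}
    (hG : ∀ i, 0 ≤ G i) (hk : 1 ≤ k) {S β : ℝ} (hβ : 0 < β) (hβ1 : β < 1)
    (hS : 2 ^ 27 * k / β ≤ S)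
    (h : ∑ i ∈ s with k + 1 ≤ deg i, S ^ (2 * deg i) * G i ≤ ∑ i ∈ s, G i) :
    ∑ i ∈ s with k + 1 ≤ deg i, G i ≤
      (β / (2 ^ 27 * k)) ^ (2 * k) * (∑ i ∈ s, G i) * (β / 2) := by
  have hk1 : (1 : ℝ) ≤ k := by exact_mod_cast hk
  set r := β / (2 ^ 27 * k) with hr
  have hr0 : 0 < r := by positivity
  have hrβ : r ≤ β / 2 := div_le_div_of_nonneg_left hβ.le (by norm_num) (by linarith)
  have hrS : 1 ≤ r * S := by
    calc 1 = r * (2 ^ 27 * k / β) := by rw [hr]; field_simp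
      _ ≤ r * S := by gcongr
  have hS1 : 1 ≤ S := by nlinarith
  have hN : 0 ≤ ∑ i ∈ s, G i := Finset.sum_nonneg fun i _ => hG i
  calc ∑ i ∈ s with k + 1 ≤ deg i, G i
      ≤ r ^ (2 * (k + 1)) * ∑ i ∈ s, G i :=
        sum_filter_le_pow_mul_of_sum_pow_mul_le hG hr0.le hS1 hrS h
    _ = r ^ (2 * k) * (∑ i ∈ s, G i) * r ^ 2 := by ring
    _ ≤ r ^ (2 * k) * (∑ i ∈ s, G i) * (β / 2) := by
        gcongr
        nlinarith

theorem half_sum_le_sum_filter_not_of_attenuated {ι : Type*} {s : Finset ι} {deg : ι → ℕ}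
    {G : ι → ℝ} (hG : ∀ i, 0 ≤ G i) (hk : 1 ≤ k) {S β : ℝ} (hβ : 0 < β) (hβ1 : β < 1)
    (hS : 2 ^ 27 * k / β ≤ S)
    (h : ∑ i ∈ s with k + 1 ≤ deg i, S ^ (2 * deg i) * G i ≤ ∑ i ∈ s, G i) :
    (∑ i ∈ s, G i) / 2 ≤ ∑ i ∈ s with ¬ k + 1 ≤ deg i, G i := by
  have hk1 : (1 : ℝ) ≤ k := by exact_mod_cast hk
  have hr1 : (β / (2 ^ 27 * k)) ^ (2 * k) ≤ 1 :=
    pow_le_one₀ (by positivity) ((div_le_one (by positivity)).2 (by linarith))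
  have hN : 0 ≤ ∑ i ∈ s, G i := Finset.sum_nonneg fun i _ => hG i
  have hhigh : ∑ i ∈ s with k + 1 ≤ deg i, G i ≤ (∑ i ∈ s, G i) / 2 := by
    calc ∑ i ∈ s with k + 1 ≤ deg i, G i
        ≤ (β / (2 ^ 27 * k)) ^ (2 * k) * (∑ i ∈ s, G i) * (β / 2) :=
          sum_filter_le_of_attenuated hG hk hβ hβ1 hS h
      _ ≤ 1 * (∑ i ∈ s, G i) * (1 / 2) := by gcongr
      _ = (∑ i ∈ s, G i) / 2 := by ring
  linarith [Finset.sum_filter_add_sum_filter_not s (fun i => k + 1 ≤ deg i) G]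

variable {I d : ℕ} {c : (Fin n → ℕ) → (Fin I → ℝ) → ℝ}

theorem gaussianN_setOf_not_le_smoothing_averageSq (hk : 1 ≤ k)
    (hc : ∀ α, IsPolyOfDegreeLE d (c α)) (Λ : Finset (Fin n → ℕ)) {S a b β : ℝ}
    (hab : a ^ 2 + b ^ 2 = 1) (hβ : 0 < β) (hβ1 : β < 1) (hS : 2 ^ 27 * k / β ≤ S)
    (hatt : ∑ α ∈ Λ with k + 1 ≤ ∑ i, α i, S ^ (2 * ∑ i, α i) * ∫ υ, c α υ ^ 2 ∂(gaussianN I) ≤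
      ∑ α ∈ Λ, ∫ υ, c α υ ^ 2 ∂(gaussianN I)) :
    gaussianN n {x | ¬ (β / (2 ^ 27 * k)) ^ (2 * k) *
        ∑ α ∈ Λ, ∫ υ, c α υ ^ 2 ∂(gaussianN I) ≤
      ∫ y, averageSq c Λ (a • x + b • y) ∂(gaussianN n)} ≤ ENNReal.ofReal β := by
  have hG (α : Fin n → ℕ) : 0 ≤ ∫ υ, c α υ ^ 2 ∂(gaussianN I) :=
    integral_nonneg fun _ => sq_nonneg _
  have hsmooth0 (Λ : Finset (Fin n → ℕ)) (x : Fin n → ℝ) :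
      0 ≤ ∫ y, averageSq c Λ (a • x + b • y) ∂(gaussianN n) :=
    integral_nonneg fun _ => averageSq_nonneg c _ _
  have hhigh := sum_filter_le_of_attenuated hG hk hβ hβ1 hS hatt
  have hhalf := half_sum_le_sum_filter_not_of_attenuated hG hk hβ hβ1 hS hatt
  set N := ∑ α ∈ Λ, ∫ υ, c α υ ^ 2 ∂(gaussianN I)
  have hN0 : 0 ≤ N := Finset.sum_nonneg fun α _ => hG α
  rcases hN0.eq_or_lt with hN | hN
  · simp [← hN, not_lt.2 (hsmooth0 Λ _)]
  have hlow : IsPolyOfDegreeLE (2 * k) (averageSq c {α ∈ Λ | ¬ k + 1 ≤ ∑ i, α i}) :=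
    isPolyOfDegreeLE_averageSq hc fun α hα =>
      Nat.lt_succ_iff.1 (not_le.1 (Finset.mem_filter.1 hα).2)
  obtain ⟨_, hhighPoly⟩ := exists_isPolyOfDegreeLE_averageSq hc {α ∈ Λ | k + 1 ≤ ∑ i, α i}
  refine gaussianN_setOf_not_le_of_half_sub_le
    (U := fun x => ∫ y, averageSq c {α ∈ Λ | ¬ k + 1 ≤ ∑ i, α i} (a • x + b • y) ∂(gaussianN n))
    (fun x => ?_) (hhighPoly.smoothing a b).integrable (hsmooth0 _) (by positivity) ?_ ?_
  · linarith [smoothing_averageSq_filter_not_le hc Λ (fun α => k + 1 ≤ ∑ i, α i) (a • x) b]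
  · rw [← mul_assoc]
    refine ((hlow.smoothing a b).measureReal_setOf_le_lt hk (hsmooth0 _) hN hβ ?_).le
    rwa [hlow.integral_smoothing hab, integral_averageSq hc]
  · rwa [hhighPoly.integral_smoothing hab, integral_averageSq hc]

end Retention

section NiceFamilies

variable {n I d : ℕ} {g : (Fin I → ℝ) → MvPolynomial (Fin n) ℝ}

theorem NiceFamily.integral_norm2sq_zoom (hg : NiceFamily n I d g) (lam : ℝ) (x : Fin n → ℝ) :
    ∫ υ, norm2sq (zoom (g υ) lam x) ∂(gaussianN I) =
      ∫ y, averageSq (fun α υ => hermiteCoeff (g υ) α) (boxIndices n d)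
        (Real.sqrt (1 - lam) • x + Real.sqrt lam • y) ∂(gaussianN n) := by
  simp only [norm2sq, eval_zoom, fun υ => eval_eq_sum_hermiteCoeff (hg.1 υ)]
  exact integral_integral_sq_comp_affine hg.isPolyOfDegreeLE_hermiteCoeff _ _ _

theorem NiceFamily.integral_norm2sq (hg : NiceFamily n I d g) :
    ∫ υ, norm2sq (g υ) ∂(gaussianN I) =
      ∑ α ∈ boxIndices n d, ∫ υ, hermiteCoeff (g υ) α ^ 2 ∂(gaussianN I) := by
  have hswap := integral_integral_sq_comp_affine hg.isPolyOfDegreeLE_hermiteCoeff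
    (boxIndices n d) 0 1
  simp only [one_smul, zero_add, integral_averageSq hg.isPolyOfDegreeLE_hermiteCoeff] at hswap
  simpa only [norm2sq, fun υ => eval_eq_sum_hermiteCoeff (hg.1 υ)] using hswap

theorem NiceFamily.integral_hyperVarGE (hg : NiceFamily n I d g) (R : ℝ) (m : ℕ) :
    ∫ υ, hyperVarGE R m (g υ) ∂(gaussianN I) = ∑ α ∈ boxIndices n d with m ≤ ∑ i, α i,
      R ^ (2 * ∑ i, α i) * ∫ υ, hermiteCoeff (g υ) α ^ 2 ∂(gaussianN I) := by
  simp only [fun υ => hyperVarGE_eq_sum_boxIndices (hg.1 υ) R m]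
  rw [integral_finsetSum _ fun α _ =>
    ((hg.isPolyOfDegreeLE_hermiteCoeff α).pow 2).integrable.const_mul _]
  simp only [integral_const_mul]

end NiceFamilies

theorem one_le_log_three_div {β : ℝ} (hβ : 0 < β) (hβ1 : β < 1) : 1 ≤ Real.log (3 / β) := by
  rw [Real.le_log_iff_exp_le (by positivity)]
  exact Real.exp_one_lt_three.le.trans (le_div_self (by norm_num) hβ hβ1.le)

theorem two_norm_retention_attenuated_general :
    ∃ C : ℝ, 1 ≤ C ∧
      ∀ (n I d k : ℕ), 1 ≤ k →
      ∀ g : (Fin I → ℝ) → MvPolynomial (Fin n) ℝ, NiceFamily n I d g →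
      ∀ S lam β' : ℝ, 0 ≤ lam → lam ≤ 1 → 0 < β' → β' < 1 →
      (∫ υ, hyperVarGE S (k + 1) (g υ) ∂(gaussianN I)) ≤
          (∫ υ, norm2sq (g υ) ∂(gaussianN I)) →
      C * k / β' ≤ S →
      gaussianN n {x | ¬ ((β' / (C * k)) ^ (2 * k) * (∫ υ, norm2sq (g υ) ∂(gaussianN I)) ≤
          ∫ υ, norm2sq (zoom (g υ) lam x) ∂(gaussianN I))} ≤ ENNReal.ofReal β' := by
  refine ⟨2 ^ 27, by norm_num, ?_⟩
  intro n I d k hk g hg S lam β' hlam0 hlam1 hβ hβ1 hatt hS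
  have hsq : Real.sqrt (1 - lam) ^ 2 + Real.sqrt lam ^ 2 = 1 := by
    rw [Real.sq_sqrt (sub_nonneg.2 hlam1), Real.sq_sqrt hlam0, sub_add_cancel]
  rw [hg.integral_hyperVarGE, hg.integral_norm2sq] at hatt
  simp only [hg.integral_norm2sq, hg.integral_norm2sq_zoom]
  exact gaussianN_setOf_not_le_smoothing_averageSq hk hg.isPolyOfDegreeLE_hermiteCoeff _
    hsq hβ hβ1 hS hatt

/-- Two-norm retention for an attenuated-on-average nice distribution: there is a
universal constant `C` such that if a nice distribution `(g_υ)` of polynomials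
(of degree at most `d`) is `(k,S,1)`-attenuated on average for some `k ≥ 1`, and
`S ≥ C·k·log(3/β')/β'`, then for `0 ≤ λ ≤ 1` and `x ∼ N(0,1)^n`, except with
probability at most `β'`, we have
`E_υ[‖(g_υ)_{λ|x}‖₂²] ≥ (β'/(C·k))^{2k}·E_υ[‖g_υ‖₂²]`.  Here `HyperVar_S[g^{>k}]`
is encoded as `hyperVarGE S (k+1) g`. -/
theorem two_norm_retention_attenuated :
    ∃ C : ℝ, 1 ≤ C ∧
      ∀ (n I d k : ℕ), 1 ≤ k →
      ∀ g : (Fin I → ℝ) → MvPolynomial (Fin n) ℝ, NiceFamily n I d g →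
      ∀ S lam β' : ℝ, 0 ≤ lam → lam ≤ 1 → 0 < β' → β' < 1 →
      (∫ υ, hyperVarGE S (k + 1) (g υ) ∂(gaussianN I)) ≤
          (∫ υ, norm2sq (g υ) ∂(gaussianN I)) →
      C * k * Real.log (3 / β') / β' ≤ S →
      gaussianN n {x | ¬ ((β' / (C * k)) ^ (2 * k) * (∫ υ, norm2sq (g υ) ∂(gaussianN I)) ≤
          ∫ υ, norm2sq (zoom (g υ) lam x) ∂(gaussianN I))} ≤ ENNReal.ofReal β' := by
  obtain ⟨C, hC, h⟩ := two_norm_retention_attenuated_general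
  refine ⟨C, hC, fun n I d k hk g hg S lam β' hlam0 hlam1 hβ hβ1 hatt hS =>
    h n I d k hk g hg S lam β' hlam0 hlam1 hβ hβ1 hatt (le_trans ?_ hS)⟩
  exact div_le_div_of_nonneg_right
    (le_mul_of_one_le_right (by positivity) (one_le_log_three_div hβ hβ1)) hβ.le
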